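/- Let K ⊂ ℝ^3 be a convex body such that every plane section of K through a fixed interior point p is centrally symmetric, and p is not a center of symmetry of K. Then K is an ellipsoid. -/

import Mathlib

noncomputable section

open Metric Set MeasureTheory

/-- Euclidean n-space. -/
abbrev Euc (n : ℕ) := EuclideanSpace ℝ (Fin n)

/-- A convex body: compact, convex, with nonempty interior. -/
def IsConvexBody {n : ℕ} (K : Set (Euc n)) : Prop :=
  IsCompact K ∧ Convex ℝ K ∧ (interior K).Nonempty

/-- `f` is the (orthogonal) reflection of the space with fixed-point set the affine
subspace `A`: an involutive isometry whose fixed points are exactly `A`. -/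
def IsReflectionFix {n : ℕ} (f : Euc n → Euc n) (A : AffineSubspace ℝ (Euc n)) : Prop :=
  Isometry f ∧ f ∘ f = id ∧ {x | f x = x} = (A : Set (Euc n))

/-- `A` is a plane of symmetry of the set `K`. -/
def IsSymmetryPlane {n : ℕ} (K : Set (Euc n)) (A : AffineSubspace ℝ (Euc n)) : Prop :=
  ∃ f : Euc n → Euc n, IsReflectionFix f A ∧ f '' K = K

/-- `L` is a plane of symmetry of the set `s` within the flat `P`:
some involutive isometry of the ambient space preserves `P`, has exactly `L` as
fixed-point set inside `P`, and maps `s` onto itself. -/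
def IsSymmPlaneOfIn {n : ℕ} (s : Set (Euc n)) (P L : AffineSubspace ℝ (Euc n)) : Prop :=
  L ≤ P ∧ ∃ f : Euc n → Euc n, Isometry f ∧ f ∘ f = id ∧
    f '' (P : Set (Euc n)) = (P : Set (Euc n)) ∧
    {x ∈ (P : Set (Euc n)) | f x = x} = (L : Set (Euc n)) ∧ f '' s = s

/-- `L` is a plane of symmetry of the section `P ∩ K` within the flat `P`. -/
def IsSectionSymmPlane {n : ℕ} (K : Set (Euc n)) (P L : AffineSubspace ℝ (Euc n)) : Prop :=
  IsSymmPlaneOfIn ((P : Set (Euc n)) ∩ K) P L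

/-- A hyperplane: a nonempty affine subspace whose direction has dimension `n - 1`. -/
def IsHyperplane {n : ℕ} (A : AffineSubspace ℝ (Euc n)) : Prop :=
  (A : Set (Euc n)).Nonempty ∧ Module.finrank ℝ A.direction = n - 1

/-- A rotation about the affine subspace `L`: an affine isometry fixing `L`
pointwise whose linear part has determinant one (orientation preserving). -/
def IsRotationAbout {n : ℕ} (f : Euc n ≃ᵃⁱ[ℝ] Euc n) (L : AffineSubspace ℝ (Euc n)) : Prop :=
  (∀ x ∈ L, f x = x) ∧
    LinearMap.det (f.linearIsometryEquiv.toLinearEquiv : Euc n →ₗ[ℝ] Euc n) = 1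

/-- A body of revolution with axis the line `L`. -/
def IsRevolutionBody {n : ℕ} (K : Set (Euc n)) (L : AffineSubspace ℝ (Euc n)) : Prop :=
  IsConvexBody K ∧ (L : Set (Euc n)).Nonempty ∧ Module.finrank ℝ L.direction = 1 ∧
    ∀ f : Euc n ≃ᵃⁱ[ℝ] Euc n, IsRotationAbout f L → f '' K = K

/-- A `k`-dimensional ellipsoid: affine image of a `k`-dimensional unit ball. -/
def IsEllipsoidOfDim {n : ℕ} (k : ℕ) (s : Set (Euc n)) : Prop :=
  ∃ (T : Euc n ≃ᵃ[ℝ] Euc n) (V : Submodule ℝ (Euc n)), Module.finrank ℝ V = k ∧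
    s = T '' (closedBall 0 1 ∩ (V : Set (Euc n)))

/-- The shadow boundary of `K` with respect to the direction submodule `D`:
the union of the touching sets of all supporting flats of `K` with direction `D`. -/
def shadowBoundary {n : ℕ} (K : Set (Euc n)) (D : Submodule ℝ (Euc n)) : Set (Euc n) :=
  ⋃ l ∈ {l : AffineSubspace ℝ (Euc n) | l.direction = D ∧
      ((l : Set (Euc n)) ∩ K).Nonempty ∧ (l : Set (Euc n)) ∩ interior K = ∅},
    ((l : Set (Euc n)) ∩ K)

/-- `p` is a Larman point of `K`: every hyperplane section of `K` through `p` has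
an `(n-2)`-plane of symmetry. -/
def IsLarmanPoint {n : ℕ} (K : Set (Euc n)) (p : Euc n) : Prop :=
  p ∈ interior K ∧ ∀ P : AffineSubspace ℝ (Euc n), IsHyperplane P → p ∈ P →
    ∃ L : AffineSubspace ℝ (Euc n), Module.finrank ℝ L.direction = n - 2 ∧
      IsSectionSymmPlane K P L

/-- `p` is a revolution point of `K`: every hyperplane section of `K` through `p` has
an `(n-2)`-plane of symmetry containing `p`. -/
def IsRevolutionPoint {n : ℕ} (K : Set (Euc n)) (p : Euc n) : Prop :=
  p ∈ interior K ∧ ∀ P : AffineSubspace ℝ (Euc n), IsHyperplane P → p ∈ P →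
    ∃ L : AffineSubspace ℝ (Euc n), Module.finrank ℝ L.direction = n - 2 ∧ p ∈ L ∧
      IsSectionSymmPlane K P L

namespace FCT
open Filter Topology

structure FC (P : Set (ℝ × ℝ)) (f : ℝ × ℝ → ℝ) : Prop where
  comp : IsCompact P
  symm : ∀ y ∈ P, -y ∈ P
  hq : ((1:ℝ),(0:ℝ)) ∈ interior P
  conc : ConcaveOn ℝ P f
  cl : ∀ l : ℝ, IsClosed {y | y ∈ P ∧ l ≤ f y + f (-y)}
  pos : ∀ y ∈ interior P, 0 < f y + f (-y)
  refl : ∀ s : ℝ, ∃ β κ : ℝ, ∀ b, (1+s*b, b) ∈ P →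
     (1+s*(β-b), β-b) ∈ P ∧ f (1+s*b, b) - f (-(1+s*(β-b), β-b)) = κ
  ne : ∀ a, (a,(0:ℝ)) ∈ P → (a,(0:ℝ)) ∉ interior P → f (a,0) + f (-(a,0)) ≤ 0
  der : HasFDerivAt (fun y => f y - f (-y)) (0 : ℝ × ℝ →L[ℝ] ℝ) (1,0)

def LL (f : ℝ × ℝ → ℝ) (y : ℝ × ℝ) : ℝ := f y + f (-y)
def DD (f : ℝ × ℝ → ℝ) (y : ℝ × ℝ) : ℝ := f y - f (-y)
def qq : ℝ × ℝ := (1, 0)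
def ln (s b : ℝ) : ℝ × ℝ := (1 + s * b, b)

lemma LL_neg (f : ℝ × ℝ → ℝ) (y) : LL f (-y) = LL f y := by
  unfold LL; rw [neg_neg]; ring
lemma DD_neg (f : ℝ × ℝ → ℝ) (y) : DD f (-y) = - DD f y := by
  unfold DD; rw [neg_neg]; ring
lemma DD_zero (f : ℝ × ℝ → ℝ) : DD f 0 = 0 := by
  unfold DD; rw [neg_zero]; ring
lemma ln_zero (s : ℝ) : ln s 0 = qq := by simp [ln, qq]
lemma eq_ln {y : ℝ × ℝ} (hb : y.2 ≠ 0) : y = ln ((y.1 - 1) / y.2) y.2 := by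
  unfold ln; ext
  · simp; field_simp; ring
  · rfl
lemma ln_combo (s b c x y : ℝ) (h : x + y = 1) : x • ln s b + y • ln s c = ln s (x*b+y*c) := by
  unfold ln; ext
  · simp; linear_combination h
  · simp

lemma concave_seg {P : Set (ℝ × ℝ)} {g : ℝ × ℝ → ℝ} (hg : ConcaveOn ℝ P g) {u v w : ℝ × ℝ}
    {x y : ℝ} (hu : u ∈ P) (hv : v ∈ P) (hx : 0 ≤ x) (hy : 0 ≤ y) (hxy : x + y = 1)
    (hw : x • u + y • v = w) : w ∈ P ∧ x * g u + y * g v ≤ g w := by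
  subst hw
  exact ⟨hg.1 hu hv hx hy hxy, by simpa using hg.2 hu hv hx hy hxy⟩

namespace FC
variable {P : Set (ℝ × ℝ)} {f : ℝ × ℝ → ℝ}

lemma cvx (h : FC P f) : Convex ℝ P := h.conc.1

lemma concL (h : FC P f) : ConcaveOn ℝ P (LL f) := by
  refine ⟨h.cvx, ?_⟩
  intro x hx y hy a b ha hb hab
  have h1 := h.conc.2 hx hy ha hb hab
  have h2 := h.conc.2 (h.symm x hx) (h.symm y hy) ha hb hab
  unfold LL
  have e : -(a • x + b • y) = a • (-x) + b • (-y) := by simp; abel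
  rw [e]
  simp only [smul_eq_mul] at *
  linarith

lemma neg_int (h : FC P f) {y : ℝ × ℝ} (hy : y ∈ interior P) : -y ∈ interior P := by
  have hP : -P = P := by
    ext z; constructor
    · intro hz; simpa using h.symm _ hz
    · intro hz; exact h.symm _ hz
  have : interior (-P) = - interior P := by
    have := (Homeomorph.neg (ℝ × ℝ)).preimage_interior P
    exact this.symm
  rw [hP] at this
  rw [this]; simpa using hy

lemma qint (h : FC P f) : qq ∈ interior P := h.hq

lemma zint (h : FC P f) : (0 : ℝ × ℝ) ∈ interior P := by
  have := h.cvx.interior h.qint (h.neg_int h.qint) (by norm_num : (0:ℝ) ≤ 1/2)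
    (by norm_num : (0:ℝ) ≤ 1/2) (by norm_num)
  simpa using this

lemma contf (h : FC P f) {y : ℝ × ℝ} (hy : y ∈ interior P) : ContinuousAt f y := by
  have h1 : ConcaveOn ℝ (interior P) f := h.conc.subset interior_subset h.cvx.interior
  exact (h1.continuousOn isOpen_interior).continuousAt (isOpen_interior.mem_nhds hy)

lemma contf' (h : FC P f) {y : ℝ × ℝ} (hy : y ∈ interior P) :
    ContinuousAt (fun y => f (-y)) y :=
  ContinuousAt.comp (f := fun y : ℝ × ℝ => -y) (h.contf (h.neg_int hy)) continuous_neg.continuousAt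

lemma contL (h : FC P f) {y : ℝ × ℝ} (hy : y ∈ interior P) : ContinuousAt (LL f) y :=
  (h.contf hy).add (h.contf' hy)
lemma contD (h : FC P f) {y : ℝ × ℝ} (hy : y ∈ interior P) : ContinuousAt (DD f) y :=
  (h.contf hy).sub (h.contf' hy)

lemma L_le (h : FC P f) {y : ℝ × ℝ} (hy : y ∈ P) : LL f y ≤ LL f 0 := by
  have := (concave_seg h.concL hy (h.symm y hy) (by norm_num : (0:ℝ) ≤ 1/2)
    (by norm_num : (0:ℝ) ≤ 1/2) (by norm_num) (w := 0) (by simp)).2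
  rw [LL_neg] at this; linarith

lemma ray (h : FC P f) {y : ℝ × ℝ} (hy : y ∈ P) {t : ℝ} (ht : 0 ≤ t) (ht1 : t ≤ 1) :
    t • y ∈ P ∧ t * LL f y + (1 - t) * LL f 0 ≤ LL f (t • y) :=
  concave_seg h.concL hy (interior_subset h.zint) ht (by linarith) (by ring) (by simp)

/-- structure of the reflection -/
lemma reflLD (h : FC P f) (s : ℝ) : ∃ β : ℝ, ln s β ∈ P ∧ LL f (ln s β) = LL f qq ∧
    ∀ b, ln s b ∈ P → ln s (β - b) ∈ P ∧ LL f (ln s (β - b)) = LL f (ln s b) ∧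
      DD f (ln s b) + DD f (ln s (β - b)) = DD f qq + DD f (ln s β) := by
  obtain ⟨β, κ, hβ⟩ := h.refl s
  have key : ∀ b, ln s b ∈ P → ln s (β - b) ∈ P ∧ LL f (ln s (β - b)) = LL f (ln s b) ∧
      DD f (ln s b) + DD f (ln s (β - b)) = 2 * κ := by
    intro b hb
    obtain ⟨h1, h2⟩ := hβ b hb
    obtain ⟨h3, h4⟩ := hβ (β - b) h1
    have e : β - (β - b) = b := by ring
    rw [e] at h4
    refine ⟨h1, ?_, ?_⟩
    · unfold LL ln; linarith
    · unfold DD ln; linarith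
  have h0 := key 0 (by rw [ln_zero]; exact interior_subset h.qint)
  rw [sub_zero, ln_zero] at h0
  refine ⟨β, h0.1, h0.2.1, fun b hb => ?_⟩
  obtain ⟨h1, h2, h3⟩ := key b hb
  exact ⟨h1, h2, by rw [h3, h0.2.2]⟩

/-- concavity along a line: x between -/
lemma lineL (h : FC P f) {s b c d : ℝ} (hb : ln s b ∈ P) (hd : ln s d ∈ P)
    (h1 : b < c) (h2 : c < d) : ln s c ∈ P ∧
      (d - c) * LL f (ln s b) + (c - b) * LL f (ln s d) ≤ (d - b) * LL f (ln s c) := by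
  have hbd : 0 < d - b := by linarith
  have := concave_seg h.concL hb hd (x := (d - c) / (d - b)) (y := (c - b) / (d - b))
    (w := ln s c) (by apply div_nonneg <;> linarith) (by apply div_nonneg <;> linarith)
    (by field_simp; ring) (by rw [ln_combo _ _ _ _ _ (by field_simp; ring)]; congr 1; field_simp; ring)
  refine ⟨this.1, ?_⟩
  have h3 := mul_le_mul_of_nonneg_left this.2 hbd.le
  calc _ = (d - b) * ((d - c) / (d - b) * LL f (ln s b) + (c - b) / (d - b) * LL f (ln s d)) := by
        field_simp
    _ ≤ _ := h3

lemma opp (h : FC P f) {s b c : ℝ} (hb : ln s b ∈ P) (hc : ln s c ∈ P)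
    (h1 : LL f qq ≤ LL f (ln s b)) (h2 : LL f qq < LL f (ln s c)) : 0 ≤ b * c := by
  by_contra hn
  push Not at hn
  rcases lt_trichotomy b 0 with hb0 | hb0 | hb0
  · have hc0 : 0 < c := by by_contra! h5; nlinarith
    have := (h.lineL hb hc hb0 hc0).2
    rw [ln_zero] at this
    nlinarith
  · subst hb0; simp at hn
  · have hc0 : c < 0 := by by_contra! h5; nlinarith
    have := (h.lineL hc hb hc0 hb0).2
    rw [ln_zero] at this
    nlinarith

lemma ln_int (h : FC P f) {s b c t : ℝ} (hb : ln s b ∈ interior P) (hc : ln s c ∈ P)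
    (ht : 0 < t) (ht1 : t ≤ 1) : ln s (t * b + (1 - t) * c) ∈ interior P := by
  have := h.cvx.combo_interior_self_mem_interior hb hc ht (by linarith : 0 ≤ 1 - t) (by ring)
  rwa [ln_combo _ _ _ _ _ (by ring)] at this

lemma beta_int (h : FC P f) {s β : ℝ}
    (hβ : ∀ b, ln s b ∈ P → ln s (β - b) ∈ P) : ln s β ∈ interior P := by
  have hc : Continuous fun ε : ℝ => ln s (-ε * β) := by unfold ln; fun_prop
  have : ∀ᶠ ε in 𝓝 (0:ℝ), ln s (-ε * β) ∈ interior P := by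
    apply hc.continuousAt.eventually
    simp only [neg_zero, zero_mul, ln_zero]
    exact isOpen_interior.mem_nhds h.qint
  obtain ⟨ε, hε, hε0⟩ := ((this.filter_mono nhdsWithin_le_nhds).and
    (self_mem_nhdsWithin (a := (0:ℝ)) (s := Ioi 0))).exists
  have hε0 : 0 < ε := hε0
  have h1 := hβ _ (interior_subset hε)
  have h2 := h.ln_int (s := s) (b := 0) (c := β - -ε * β) (t := ε / (1 + ε))
    (by rw [ln_zero]; exact h.qint) h1 (by positivity) (by rw [div_le_one (by linarith)]; linarith)
  convert h2 using 2
  field_simp; ring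

lemma between_int (h : FC P f) {s β b : ℝ}
    (hβ : ∀ b, ln s b ∈ P → ln s (β - b) ∈ P) (hb : 0 ≤ b * (β - b)) : ln s b ∈ interior P := by
  have h1 := h.beta_int hβ
  by_cases hb0 : β = 0
  · have : b = 0 := by subst hb0; nlinarith
    subst this; rw [ln_zero]; exact h.qint
  have h2 : b = (b / β) * β + (1 - b/β) * 0 := by field_simp; ring
  rw [h2]
  by_cases hbz : b = 0
  · subst hbz; simp [ln_zero]; exact h.qint
  have h3 : 0 < b / β := by
    have : 0 < b * β := by nlinarith [sq_pos_of_ne_zero hbz]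
    rw [show b / β = b * β / β^2 by field_simp]; positivity
  have h4 : b / β ≤ 1 := by
    have hp : 0 < β ^ 2 := by positivity
    rw [show b / β = b * β / β^2 by field_simp, div_le_one hp]
    have : 0 < b * β := by nlinarith [sq_pos_of_ne_zero hbz]
    by_contra! h5
    have : b * b ≤ b * β := by linarith
    nlinarith [sq_nonneg (b - β)]
  exact h.ln_int h1 (by rw [ln_zero]; exact interior_subset h.qint) h3 h4

/-- fact (iv) -/
lemma level_int (h : FC P f) (h0 : LL f qq < LL f 0) {r : ℝ × ℝ} (hr : r ∈ P)
    (hL : LL f qq ≤ LL f r) : r ∈ interior P := by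
  by_cases hb : r.2 = 0
  · by_contra hn
    have e : r = (r.1, 0) := by ext <;> simp [hb]
    rw [e] at hr hn hL
    have := h.ne r.1 hr hn
    have h2 := h.pos _ h.qint
    unfold LL at hL
    linarith
  have e := eq_ln hb
  set s := (r.1 - 1) / r.2
  set b := r.2 with hbdef
  obtain ⟨β, hβ1, hβ2, hβ⟩ := h.reflLD s
  by_cases hc : 0 ≤ b * (β - b)
  · rw [e]; exact h.between_int (fun b hb => (hβ b hb).1) hc
  push Not at hc
  rw [e] at hr hL
  obtain ⟨k1, k2, -⟩ := hβ b hr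
  -- the midpoint
  have hb2 : 0 < b ^ 2 := by positivity
  set ε := -(β - b) / b with hε
  have hε0 : 0 < ε := by
    rw [hε, show -(β - b) / b = -(b * (β - b)) / b^2 by field_simp]
    apply div_pos <;> linarith
  have hm := concave_seg h.concL k1 (h.symm _ hr) (by norm_num : (0:ℝ) ≤ 1/2)
    (by norm_num : (0:ℝ) ≤ 1/2) (by norm_num) rfl
  have hm2 := h.ray hm.1 (t := 1 / (1 + ε)) (by positivity) (by rw [div_le_one (by linarith)]; linarith)
  rw [LL_neg, k2] at hm
  have hεb : ε * b = b - β := by rw [hε]; field_simp; ring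
  set s' := (-(1 + s * b) - 1) / (-b) with hs'
  have em : (1 / (1 + ε)) • ((1 / 2 : ℝ) • ln s (β - b) + (1 / 2 : ℝ) • -ln s b) = ln s' (-b/2) := by
    have hne : 1 + ε ≠ 0 := by linarith
    have hββ : β = b - ε * b := by linarith
    rw [hββ]
    unfold ln; ext
    · simp [hs']; field_simp; ring
    · simp; field_simp; ring
  rw [em] at hm2
  have hLm : LL f qq < LL f (ln s' (-b/2)) := by
    refine lt_of_lt_of_le ?_ hm2.2
    have : 0 < ε / (1 + ε) := by positivity
    have e2 : 1 - 1 / (1 + ε) = ε / (1 + ε) := by field_simp; ring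
    rw [e2]
    have h5 : 1 / (1 + ε) * LL f qq ≤ 1 / (1 + ε) * LL f (((1 / 2 : ℝ) • ln s (β - b) + (1 / 2 : ℝ) • -ln s b)) := by
      apply mul_le_mul_of_nonneg_left _ (by positivity)
      linarith [hm.2]
    have h6 : ε / (1 + ε) * LL f qq < ε / (1 + ε) * LL f 0 := by
      apply mul_lt_mul_of_pos_left h0 this
    have h7 : 1 / (1 + ε) * LL f qq + ε / (1 + ε) * LL f qq = LL f qq := by field_simp
    linarith
  have en : -ln s b = ln s' (-b) := by
    unfold ln; ext
    · simp [hs']; field_simp; ring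
    · simp
  obtain ⟨β', hβ1', hβ2', hβ'⟩ := h.reflLD s'
  have hr' := h.symm _ hr
  rw [en] at hr'
  obtain ⟨k1', k2', -⟩ := hβ' (-b) hr'
  have h8 := h.opp k1' hm2.1 (by rw [k2', ← en, LL_neg]; exact hL) hLm
  have h9 := h.between_int (fun b hb => (hβ' b hb).1) (b := -b) (by nlinarith)
  rw [e, ← neg_neg (ln s b), en]
  exact h.neg_int h9

end FC
end FCT

namespace FCT
open Filter Topology

namespace FC
variable {P : Set (ℝ × ℝ)} {f : ℝ × ℝ → ℝ}

lemma affD (h : FC P f) {u v : ℝ × ℝ} {x y : ℝ} (hu : u ∈ P) (hv : v ∈ P) (hx : 0 ≤ x)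
    (hy : 0 ≤ y) (hxy : x + y = 1) (huv : LL f u = LL f v)
    (hw : LL f (x • u + y • v) ≤ LL f u) :
    DD f (x • u + y • v) = x * DD f u + y * DD f v := by
  have h1 := (concave_seg h.conc hu hv hx hy hxy rfl).2
  have h2 := (concave_seg h.conc (h.symm _ hu) (h.symm _ hv) hx hy hxy
    (w := -(x • u + y • v)) (by simp; abel)).2
  have h3 : f (x • u + y • v) + f (-(x • u + y • v)) ≤ x * LL f u + y * LL f v := by
    rw [← huv, ← add_mul, hxy, one_mul]; exact hw
  unfold LL at h3
  unfold DD
  linarith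

lemma bad (h : FC P f) {r : ℝ × ℝ} (hr : r ∈ P) (hL : LL f r = LL f qq) {t : ℝ} (ht : 0 < t)
    (ht1 : t < 1) (hb : LL f ((1 - t) • qq + t • r) ≤ LL f qq) : DD f r = DD f qq := by
  have hqP := interior_subset h.qint
  have hmem : ∀ x : ℝ, 0 ≤ x → x ≤ 1 → (1 - x) • qq + x • r ∈ P := fun x h0 h1 =>
    h.cvx hqP hr (by linarith) h0 (by ring)
  have key : ∀ x : ℝ, 0 ≤ x → x ≤ 1 → LL f ((1 - x) • qq + x • r) ≤ LL f qq := by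
    intro x hx0 hx1
    by_contra! hn
    have hxm := hmem x hx0 hx1
    rcases lt_trichotomy x t with hxt | hxt | hxt
    · have hp : 0 < 1 - x := by linarith
      have := (concave_seg h.concL hxm hr (x := (1 - t)/(1 - x)) (y := (t - x)/(1-x))
        (w := (1 - t) • qq + t • r) (by apply div_nonneg <;> linarith)
        (by apply div_nonneg <;> linarith) (by field_simp; ring)
        (by
          rw [smul_add, smul_smul, smul_smul, add_assoc, ← add_smul]
          congr 2 <;> field_simp; ring)).2
      have h1 : 0 < (1 - t)/(1 - x) := by apply div_pos <;> linarith
      have h2 : (1 - t)/(1 - x) + (t - x)/(1-x) = 1 := by field_simp; ring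
      rw [hL] at this
      have h3 := mul_lt_mul_of_pos_left hn h1
      have h4 : (1 - t)/(1 - x) * LL f qq + (t - x)/(1-x) * LL f qq = LL f qq := by
        rw [← add_mul, h2, one_mul]
      linarith
    · subst hxt; linarith
    · have hp : 0 < x := by linarith
      have := (concave_seg h.concL hqP hxm (x := (x - t)/x) (y := t/x)
        (w := (1 - t) • qq + t • r) (by apply div_nonneg <;> linarith)
        (by positivity) (by field_simp; ring)
        (by
          rw [smul_add, smul_smul, smul_smul, ← add_assoc, ← add_smul]
          congr 2 <;> field_simp; ring)).2
      have h1 : 0 < t / x := by positivity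
      have h2 : (x - t)/x + t/x = 1 := by field_simp; ring
      have h3 := mul_lt_mul_of_pos_left hn h1
      have h4 : (x - t)/x * LL f qq + t/x * LL f qq = LL f qq := by
        rw [← add_mul, h2, one_mul]
      linarith
  have aff : ∀ x : ℝ, x ∈ Icc (0:ℝ) 1 → DD f (qq + x • (r - qq)) = DD f qq + x * (DD f r - DD f qq) := by
    intro x hx
    have e : qq + x • (r - qq) = (1 - x) • qq + x • r := by
      rw [smul_sub, sub_smul, one_smul]; abel
    rw [e, h.affD hqP hr (by linarith [hx.2]) hx.1 (by ring) hL.symm (key x hx.1 hx.2)]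
    ring
  have d0 : HasFDerivAt (DD f) (0 : ℝ × ℝ →L[ℝ] ℝ) (qq + (0:ℝ) • (r - qq)) := by
    rw [zero_smul, add_zero]; exact h.der
  have d1 : HasDerivAt (fun x : ℝ => qq + x • (r - qq)) (r - qq) 0 := by
    simpa using ((hasDerivAt_id (0:ℝ)).smul_const (r - qq)).const_add qq
  have d2 := d0.comp_hasDerivAt (0:ℝ) d1
  have d3 : HasDerivWithinAt (fun x : ℝ => DD f qq + x * (DD f r - DD f qq)) (DD f r - DD f qq) (Icc 0 1) 0 := by
    simpa using (((hasDerivAt_id (0:ℝ)).mul_const (DD f r - DD f qq)).const_add (DD f qq)).hasDerivWithinAt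
  have d4 : HasDerivWithinAt (fun x : ℝ => DD f qq + x * (DD f r - DD f qq)) 0 (Icc 0 1) 0 := by
    have := d2.hasDerivWithinAt (s := Icc 0 1)
    refine (this.congr (fun x hx => (aff x hx).symm) (aff 0 (by simp)).symm)
  have := (uniqueDiffOn_Icc (zero_lt_one (α := ℝ)) 0 (by simp)).eq_deriv _ d3 d4
  linarith

/-- reflection formula at good points -/
lemma good (h : FC P f) {r : ℝ × ℝ} (hr : r ∈ P) (hL : LL f r = LL f qq) (hD : DD f r ≠ DD f qq)
    (hb : r.2 ≠ 0) (k : ℝ) (hk : r + k • (r - qq) ∈ P) :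
    DD f (r + k • (r - qq)) - DD f r = DD f qq - DD f (qq - k • (r - qq)) := by
  have hmid : LL f qq < LL f ((1 - (1/2:ℝ)) • qq + (1/2:ℝ) • r) := by
    by_contra! hn
    exact hD (h.bad hr hL (by norm_num) (by norm_num) hn)
  have e := eq_ln hb
  set s := (r.1 - 1) / r.2
  set b := r.2 with hbdef
  obtain ⟨β, hβ1, hβ2, hβ⟩ := h.reflLD s
  rw [e, ← ln_zero s, ln_combo _ _ _ _ _ (by norm_num)] at hmid
  have e2 : (1 - 1 / 2) * 0 + 1 / 2 * b = b / 2 := by ring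
  rw [e2, ln_zero] at hmid
  rw [e] at hr hL
  have hq : ln s 0 ∈ P := by rw [ln_zero]; exact interior_subset h.qint
  have hb2 : ln s (b/2) ∈ P := by
    have := h.cvx hq hr (by norm_num : (0:ℝ) ≤ 1/2) (by norm_num : (0:ℝ) ≤ 1/2) (by norm_num)
    rw [ln_combo _ _ _ _ _ (by norm_num)] at this
    convert this using 2; ring
  have hββ : β = b := by
    obtain ⟨k1, k2, -⟩ := hβ _ hb2
    have h3 := h.opp k1 hb2 (by rw [k2]; exact hmid.le) hmid
    have h4 : β ≠ b/2 := by
      intro h4; rw [← h4, hβ2] at hmid; exact lt_irrefl _ hmid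
    have hq' : LL f (ln s 0) = LL f qq := by rw [ln_zero]
    by_contra hne
    rcases lt_or_gt_of_ne hb with hb0 | hb0
    · have h5 : β < b / 2 := lt_of_le_of_ne (by nlinarith) h4
      rcases lt_or_gt_of_ne hne with h6 | h6
      · have := (h.lineL hβ1 hb2 h6 (by linarith)).2
        rw [hL, hβ2] at this; nlinarith
      · have := (h.lineL hr hb2 h6 h5).2
        rw [hL, hβ2] at this; nlinarith
    · have h5 : b / 2 < β := lt_of_le_of_ne (by nlinarith) (Ne.symm h4)
      rcases lt_or_gt_of_ne hne with h6 | h6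
      · have := (h.lineL hb2 hr h5 h6).2
        rw [hL, hβ2] at this; nlinarith
      · have := (h.lineL hb2 hβ1 (by linarith) h6).2
        rw [hL, hβ2] at this; nlinarith
  have e3 : r + k • (r - qq) = ln s (b + k * b) := by
    rw [e]; unfold ln qq; ext
    · simp; ring
    · simp
  have e4 : qq - k • (r - qq) = ln s (β - (b + k * b)) := by
    rw [e, hββ]; unfold ln qq; ext
    · simp; ring
    · simp
  rw [e3] at hk ⊢
  rw [e4]
  have := (hβ _ hk).2.2
  rw [hββ] at this ⊢
  rw [e]
  linarith

/-- W construction -/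
def Wmap (t : ℝ) (y : ℝ × ℝ) : ℝ × ℝ :=
  ((t + (y.1 - 1) / y.2) / (t - (y.1 - 1) / y.2), 2 / (t - (y.1 - 1) / y.2))

lemma deriv_zero (h : FC P f) {r : ℝ → ℝ × ℝ} {θ : ℝ} (hInt0 : r θ ∈ interior P)
    (hb : 0 < (r θ).2) (hc : ContinuousAt r θ)
    (hO : (fun x => r x - r θ) =O[𝓝 θ] fun x => x - θ)
    (hP : ∀ x, r x ∈ P) (hL : ∀ x, LL f (r x) = LL f qq)
    (h1 : DD f (r θ) ≠ DD f qq) (h2 : DD f (r θ) ≠ - DD f qq) :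
    HasDerivAt (fun x => DD f (r x)) 0 θ := by
  set R := r θ with hR
  set t := (R.1 + 1) / R.2 with ht
  have hts : t - (R.1 - 1) / R.2 = 2 / R.2 := by rw [ht]; field_simp; ring
  have hts0 : t - (R.1 - 1) / R.2 ≠ 0 := by rw [hts]; positivity
  have hWR : Wmap t R = R := by
    unfold Wmap; rw [hts]; ext
    · simp [ht]; field_simp; ring
    · simp
  have hWd : DifferentiableAt ℝ (Wmap t) R := by
    unfold Wmap
    have h5 := hb.ne'
    fun_prop (disch := first | exact hts0 | exact h5)
  have hG : (fun y => Wmap t y - y) =O[𝓝 R] fun y => y - R := by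
    have := (hWd.sub differentiableAt_id).isBigO_sub
    simpa [hWR] using this
  have hH : (fun y => Wmap t y - R) =O[𝓝 R] fun y => y - R := by
    have := hWd.isBigO_sub
    simpa [hWR] using this
  have hE := (hasFDerivAt_iff_isLittleO_nhds_zero.1 (show HasFDerivAt (DD f) (0 : ℝ × ℝ →L[ℝ] ℝ) qq from h.der))
  simp only [zero_apply, sub_zero] at hE
  have hWc : ContinuousAt (Wmap t) R := hWd.continuousAt
  have hWr : Tendsto (fun x => Wmap t (r x)) (𝓝 θ) (𝓝 R) := by
    have : Tendsto (Wmap t) (𝓝 R) (𝓝 R) := by simpa [ContinuousAt, hWR] using hWc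
    exact this.comp hc
  have t1 : Tendsto (fun x => -(Wmap t (r x) - r x)) (𝓝 θ) (𝓝 0) := by
    have := (hWr.sub hc).neg
    rw [← hR, sub_self, neg_zero] at this
    exact this
  have t2 : Tendsto (fun x => Wmap t (r x) - R) (𝓝 θ) (𝓝 0) := by
    have := hWr.sub_const R
    simpa using this
  have o1 := (hE.comp_tendsto t1).trans_isBigO (((hG.comp_tendsto hc).neg_left).trans hO)
  have o2 := (hE.comp_tendsto t2).trans_isBigO ((hH.comp_tendsto hc).trans hO)
  have o3 := o1.add o2
  rw [hasDerivAt_iff_isLittleO]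
  refine o3.congr' ?_ (EventuallyEq.refl _ _)
  have ev1 : ∀ᶠ x in 𝓝 θ, DD f (r x) ≠ DD f qq :=
    ((h.contD hInt0).comp_of_eq hc rfl).eventually_ne h1
  have ev2 : ∀ᶠ x in 𝓝 θ, 0 < (r x).2 :=
    (continuous_snd.continuousAt.comp hc).eventually (lt_mem_nhds hb)
  have ev3 : ∀ᶠ x in 𝓝 θ, Wmap t (r x) ∈ interior P :=
    hWr.eventually (isOpen_interior.mem_nhds hInt0)
  have hsd : ContinuousAt (fun x => t - ((r x).1 - 1) / (r x).2) θ := by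
    apply ContinuousAt.sub continuousAt_const
    refine ContinuousAt.div (f := fun x => (r x).1 - 1) (g := fun x => (r x).2) ?_ ?_ hb.ne'
    · exact (continuous_fst.continuousAt.comp hc).sub continuousAt_const
    · exact continuous_snd.continuousAt.comp hc
  have ev4 : ∀ᶠ x in 𝓝 θ, t - ((r x).1 - 1) / (r x).2 ≠ 0 := hsd.eventually_ne hts0
  filter_upwards [ev1, ev2, ev3, ev4] with x e1 e2 e3 e4
  set y := r x with hy
  have hyb : y.2 ≠ 0 := e2.ne'
  have ey : y = (y.1, y.2) := rfl
  set s := (y.1 - 1) / y.2 with hs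
  have hs1 : y.1 = 1 + s * y.2 := by rw [hs]; field_simp; ring
  have ht1 : R.1 = -1 + t * R.2 := by rw [ht]; field_simp; ring
  have w1 : Wmap t y = y + ((2 / (t - s)) / y.2 - 1) • (y - qq) := by
    unfold Wmap; rw [← hs]; unfold qq; ext
    · simp [hs1]; field_simp; ring
    · simp; field_simp; ring
  have w2 : - Wmap t y = -R + ((2 / (t - s)) / R.2 - 1) • (-R - qq) := by
    unfold Wmap; rw [← hs]; unfold qq; ext
    · simp [ht1]; field_simp; ring
    · simp; field_simp; ring
  have g1 := h.good (hP x) (hL x) e1 hyb ((2 / (t - s)) / y.2 - 1) (by rw [← hy, ← w1]; exact interior_subset e3)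
  have g2 := h.good (h.symm _ (hP θ)) (by rw [LL_neg]; exact hL θ) (by rw [DD_neg]; intro h5; apply h2; rw [← hR] at h5; linarith)
    (by simpa using hb.ne') ((2 / (t - s)) / R.2 - 1) (by rw [← hR, ← w2]; exact h.symm _ (interior_subset e3))
  rw [← hy, ← w1] at g1
  rw [← hR, ← w2, DD_neg, DD_neg] at g2
  have z1 : qq + -(Wmap t y - y) = qq - ((2 / (t - s)) / y.2 - 1) • (y - qq) := by
    nth_rewrite 1 [w1]; abel
  have z2 : qq + (Wmap t y - R) = qq - ((2 / (t - s)) / R.2 - 1) • (-R - qq) := by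
    have : Wmap t y = R - ((2 / (t - s)) / R.2 - 1) • (-R - qq) := by
      rw [← neg_neg (Wmap t y), w2]; abel
    rw [this]; abel
  simp only [Function.comp_def, smul_zero, sub_zero]
  rw [← hy, z1, z2]
  linarith

end FC

lemma ivt_lemma {h : ℝ → ℝ} {c : ℝ} (hc : ContinuousOn h (Icc 0 Real.pi)) (h0 : h 0 = c)
    (hp : h Real.pi = -c)
    (hd : ∀ θ ∈ Ioo 0 Real.pi, h θ ≠ c → h θ ≠ -c → HasDerivAt h 0 θ) :
    ∀ θ ∈ Icc 0 Real.pi, h θ = 0 := by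
  have key : ∀ θ ∈ Icc 0 Real.pi, h θ = c ∨ h θ = -c := by
    intro θ hθ
    by_contra! hn
    set S := {x | x ∈ Icc 0 θ ∧ (h x - c) * (h x + c) = 0} with hS
    have hcθ : ContinuousOn h (Icc 0 θ) := hc.mono (Icc_subset_Icc_right hθ.2)
    have hScl : IsClosed S := by
      have : ContinuousOn (fun x => (h x - c) * (h x + c)) (Icc 0 θ) := by fun_prop
      exact this.preimage_isClosed_of_isClosed isClosed_Icc isClosed_singleton
    have hSc : IsCompact S := isCompact_Icc.of_isClosed_subset hScl (fun x hx => hx.1)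
    have hne : S.Nonempty := ⟨0, ⟨le_refl 0, hθ.1⟩, by rw [h0]; ring⟩
    have hm := hSc.sSup_mem hne
    set x0 := sSup S with hx0
    have hx0θ : x0 < θ := by
      refine lt_of_le_of_ne hm.1.2 ?_
      intro e
      have := hm.2
      rw [e] at this
      rcases mul_eq_zero.1 this with h3 | h3
      · exact hn.1 (by linarith)
      · exact hn.2 (by linarith)
    have hder : ∀ x ∈ Ioo x0 θ, HasDerivAt h 0 x := by
      intro x hx
      have hxS : x ∉ S := fun hxS => absurd (le_csSup hSc.bddAbove hxS) (by rw [← hx0]; linarith [hx.1])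
      have hx' : x ∈ Icc 0 θ := ⟨by linarith [hm.1.1, hx.1], hx.2.le⟩
      have : (h x - c) * (h x + c) ≠ 0 := fun h4 => hxS ⟨hx', h4⟩
      rw [mul_ne_zero_iff] at this
      refine hd x ⟨by linarith [hm.1.1, hx.1], by linarith [hx.2, hθ.2]⟩ (fun h5 => this.1 (by linarith)) (fun h5 => this.2 (by linarith))
    obtain ⟨x, hx, hsl⟩ := exists_hasDerivAt_eq_slope h (fun _ => 0) hx0θ
      (hcθ.mono (Icc_subset_Icc_left hm.1.1)) hder
    have : h θ = h x0 := by
      have : θ - x0 ≠ 0 := by linarith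
      field_simp at hsl; linarith
    have h6 := hm.2
    rw [← this] at h6
    rcases mul_eq_zero.1 h6 with h3 | h3
    · exact hn.1 (by linarith)
    · exact hn.2 (by linarith)
  have hc0 : c = 0 := by
    have := intermediate_value_uIcc (f := h) (a := 0) (b := Real.pi) (by rwa [uIcc_of_le Real.pi_pos.le])
    rw [uIcc_of_le Real.pi_pos.le] at this
    have h0m : (0:ℝ) ∈ uIcc (h 0) (h Real.pi) := by
      rw [h0, hp]; rcases le_total c 0 with h7 | h7
      · rw [uIcc_of_le (by linarith)]; constructor <;> linarith
      · rw [uIcc_of_ge (by linarith)]; constructor <;> linarith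
    obtain ⟨x, hx, hx0⟩ := this h0m
    rcases key x hx with h8 | h8 <;> linarith
  intro θ hθ
  rcases key θ hθ with h8 | h8 <;> linarith

end FCT

namespace FCT
open Filter Topology

def cl (P : Set (ℝ × ℝ)) (f : ℝ × ℝ → ℝ) (l : ℝ) : Set (ℝ × ℝ) := {y | y ∈ P ∧ l ≤ LL f y}
def ee (θ : ℝ) : ℝ × ℝ := (Real.cos θ, Real.sin θ)
def rr (C : Set (ℝ × ℝ)) (θ : ℝ) : ℝ × ℝ := (gauge C (ee θ))⁻¹ • ee θ

lemma ee_ne (θ : ℝ) : ee θ ≠ 0 := by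
  intro h
  have h1 : Real.cos θ = 0 := congrArg Prod.fst h
  have h2 : Real.sin θ = 0 := congrArg Prod.snd h
  have := Real.sin_sq_add_cos_sq θ
  rw [h1, h2] at this; norm_num at this

namespace FC
variable {P : Set (ℝ × ℝ)} {f : ℝ × ℝ → ℝ}

lemma cl_comp (h : FC P f) (l : ℝ) : IsCompact (FCT.cl P f l) :=
  h.comp.of_isClosed_subset (h.cl l) (fun _ hy => hy.1)

lemma cl_cvx (h : FC P f) (l : ℝ) : Convex ℝ (FCT.cl P f l) := h.concL.convex_ge l

lemma cl_nhds (h : FC P f) {l : ℝ} {y : ℝ × ℝ} (hy : y ∈ interior P) (hl : l < LL f y) :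
    FCT.cl P f l ∈ 𝓝 y := by
  filter_upwards [isOpen_interior.mem_nhds hy, (h.contL hy).eventually (lt_mem_nhds hl)] with z h1 h2
  exact ⟨interior_subset h1, le_of_lt h2⟩

lemma cl_gauge (h : FC P f) {l : ℝ} (hl1 : LL f qq ≤ l) (hl2 : l < LL f 0) (y : ℝ × ℝ) :
    gauge (FCT.cl P f l) y = 1 ↔ y ∈ P ∧ LL f y = l := by
  have hn := h.cl_nhds h.zint hl2
  have hc := h.cl_cvx l
  have hcl : IsClosed (FCT.cl P f l) := h.cl l
  rw [gauge_eq_one_iff_mem_frontier hc hn, hcl.frontier_eq]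
  constructor
  · rintro ⟨⟨h1, h2⟩, h3⟩
    refine ⟨h1, le_antisymm ?_ h2⟩
    by_contra! h4
    exact h3 (mem_interior_iff_mem_nhds.2 (h.cl_nhds (h.level_int (by linarith) h1 (by linarith)) h4))
  · rintro ⟨h1, h2⟩
    refine ⟨⟨h1, h2.ge⟩, fun h3 => ?_⟩
    have hcont : Continuous fun t : ℝ => t • y := by fun_prop
    have : ∀ᶠ t in 𝓝 (1:ℝ), t • y ∈ FCT.cl P f l := by
      apply hcont.continuousAt.eventually
      simp only [one_smul]
      exact mem_interior_iff_mem_nhds.1 h3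
    obtain ⟨t, ht, ht1⟩ := ((this.filter_mono nhdsWithin_le_nhds).and
      (self_mem_nhdsWithin (a := (1:ℝ)) (s := Ioi 1))).exists
    have ht1 : 1 < t := ht1
    have ht0 : 0 < t := by linarith
    have := (h.ray ht.1 (t := 1/t) (by positivity) (by rw [div_le_one ht0]; exact ht1.le)).2
    rw [smul_smul, one_div_mul_cancel ht0.ne', one_smul, h2] at this
    have h5 : 1 / t * l ≤ 1 / t * LL f (t • y) := mul_le_mul_of_nonneg_left ht.2 (by positivity)
    have h6 : 0 < 1 - 1 / t := by rw [sub_pos, div_lt_one ht0]; exact ht1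
    have h7 := mul_lt_mul_of_pos_left hl2 h6
    nlinarith

lemma cl_gpos (h : FC P f) {l : ℝ} (hl2 : l < LL f 0) {y : ℝ × ℝ} (hy : y ≠ 0) :
    0 < gauge (FCT.cl P f l) y := by
  rw [gauge_pos (absorbent_nhds_zero (h.cl_nhds h.zint hl2))
    (NormedSpace.isVonNBounded_iff ℝ |>.2 (h.cl_comp l).isBounded)]
  exact hy

lemma rr_spec (h : FC P f) {l : ℝ} (hl1 : LL f qq ≤ l) (hl2 : l < LL f 0) (θ : ℝ) :
    rr (FCT.cl P f l) θ ∈ P ∧ LL f (rr (FCT.cl P f l) θ) = l := by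
  rw [← h.cl_gauge hl1 hl2]
  have := h.cl_gpos hl2 (ee_ne θ)
  unfold rr
  rw [gauge_smul_of_nonneg (by positivity), smul_eq_mul, inv_mul_cancel₀ this.ne']

lemma rr_bigO (h : FC P f) {l : ℝ} (hl2 : l < LL f 0) (θ : ℝ) :
    (fun x => rr (FCT.cl P f l) x - rr (FCT.cl P f l) θ) =O[𝓝 θ] fun x => x - θ := by
  set C := FCT.cl P f l
  obtain ⟨k, hk⟩ := Convex.lipschitz_gauge (h.cl_cvx l) (h.cl_nhds h.zint hl2)
  have hpos := h.cl_gpos hl2 (ee_ne θ)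
  have he : DifferentiableAt ℝ ee θ := by unfold ee; fun_prop
  have he1 := he.isBigO_sub
  have hg1 : (fun x => gauge C (ee x) - gauge C (ee θ)) =O[𝓝 θ] fun x => x - θ := by
    refine Asymptotics.IsBigO.trans ?_ he1
    refine Asymptotics.IsBigO.of_bound k (Eventually.of_forall fun x => ?_)
    exact hk.norm_sub_le _ _
  have hF : DifferentiableAt ℝ (fun z : ℝ × (ℝ × ℝ) => z.1⁻¹ • z.2) (gauge C (ee θ), ee θ) := by
    have := hpos.ne'
    fun_prop (disch := exact this)
  have hF1 := hF.isBigO_sub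
  have hcont : Tendsto (fun x => (gauge C (ee x), ee x)) (𝓝 θ) (𝓝 (gauge C (ee θ), ee θ)) :=
    ((hk.continuous.continuousAt.comp he.continuousAt).prodMk he.continuousAt)
  exact (hF1.comp_tendsto hcont).trans (hg1.prod_left he1)

lemma rr_cont (h : FC P f) {l : ℝ} (hl2 : l < LL f 0) : Continuous (rr (FCT.cl P f l)) := by
  rw [continuous_iff_continuousAt]
  intro θ
  have := (h.rr_bigO hl2 θ).trans_tendsto (by
    have : Tendsto (fun x : ℝ => x - θ) (𝓝 θ) (𝓝 (θ - θ)) := (continuous_id.sub continuous_const).continuousAt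
    simpa using this)
  simpa [ContinuousAt] using this.add_const (rr (FCT.cl P f l) θ)

lemma rr_surj (h : FC P f) {l : ℝ} (hl1 : LL f qq ≤ l) (hl2 : l < LL f 0) {y : ℝ × ℝ}
    (hy : y ∈ P) (hL : LL f y = l) (hb : 0 ≤ y.2) :
    ∃ θ ∈ Icc 0 Real.pi, rr (FCT.cl P f l) θ = y := by
  have hg := (h.cl_gauge hl1 hl2 y).2 ⟨hy, hL⟩
  have hy0 : y ≠ 0 := by rintro rfl; linarith
  set ρ := Real.sqrt (y.1^2 + y.2^2) with hρ
  have hsum : 0 < y.1^2 + y.2^2 := by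
    by_contra! hn
    have h1 : y.1 = 0 := by nlinarith [sq_nonneg y.1, sq_nonneg y.2]
    have h2 : y.2 = 0 := by nlinarith [sq_nonneg y.1, sq_nonneg y.2]
    exact hy0 (Prod.ext h1 h2)
  have hρ0 : 0 < ρ := Real.sqrt_pos.2 hsum
  have hρ2 : ρ ^ 2 = y.1^2 + y.2^2 := Real.sq_sqrt hsum.le
  have ha : |y.1| ≤ ρ := Real.abs_le_sqrt (by nlinarith [sq_nonneg y.2])
  have ha' := abs_le.1 ha
  refine ⟨Real.arccos (y.1 / ρ), ⟨Real.arccos_nonneg _, Real.arccos_le_pi _⟩, ?_⟩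
  have e : ee (Real.arccos (y.1 / ρ)) = ρ⁻¹ • y := by
    unfold ee
    rw [Real.cos_arccos (by rw [le_div_iff₀ hρ0]; linarith) (by rw [div_le_one hρ0]; linarith), Real.sin_arccos]
    have : 1 - (y.1/ρ)^2 = (y.2/ρ)^2 := by field_simp; linarith
    rw [this, Real.sqrt_sq (by positivity)]
    ext
    · simp; field_simp
    · simp; field_simp
  unfold rr
  rw [e, gauge_smul_of_nonneg (by positivity), hg, smul_smul]
  simp [hρ0.ne']

lemma rr_zero {C : Set (ℝ × ℝ)} : rr C 0 = ((gauge C (1,0))⁻¹, 0) := by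
  simp [rr, ee]

/-- axis points on the level l -/
lemma axis_eq (h : FC P f) {l : ℝ} (hl1 : LL f qq ≤ l) (hl2 : l < LL f 0) {a : ℝ} (ha : 0 < a)
    (hy : (a, (0:ℝ)) ∈ P) (hL : LL f (a, 0) = l) : rr (FCT.cl P f l) 0 = (a, 0) := by
  have hg := (h.cl_gauge hl1 hl2 (a,0)).2 ⟨hy, hL⟩
  have : ((a:ℝ),(0:ℝ)) = a • (1, 0) := by simp
  rw [this, gauge_smul_of_nonneg ha.le, smul_eq_mul] at hg
  rw [rr_zero]
  have : (gauge (FCT.cl P f l) (1,0))⁻¹ = a :=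
    (eq_inv_of_mul_eq_one_left hg).symm
  rw [this]

lemma rr_pi (h : FC P f) {l : ℝ} (hl1 : LL f qq ≤ l) (hl2 : l < LL f 0) :
    rr (FCT.cl P f l) Real.pi = - rr (FCT.cl P f l) 0 := by
  have h1 : rr (FCT.cl P f l) Real.pi = (-(gauge (FCT.cl P f l) (-1,0))⁻¹, 0) := by
    simp [rr, ee]
  have h2 := h.rr_spec hl1 hl2 Real.pi
  have hp : 0 < gauge (FCT.cl P f l) ((-1:ℝ),(0:ℝ)) := h.cl_gpos hl2 (by simp)
  have e : - rr (FCT.cl P f l) Real.pi = ((gauge (FCT.cl P f l) (-1,0))⁻¹, 0) := by rw [h1]; simp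
  have := h.axis_eq hl1 hl2 (a := (gauge (FCT.cl P f l) (-1,0))⁻¹) (by positivity)
    (by rw [← e]; exact h.symm _ h2.1) (by rw [← e, LL_neg]; exact h2.2)
  rw [this, ← e, neg_neg]

/-- Part A -/
lemma partA (h : FC P f) {r : ℝ × ℝ} (hr : r ∈ P) (hL : LL f r = LL f qq) : DD f r = 0 := by
  rcases eq_or_lt_of_le (h.L_le (interior_subset h.qint)) with h0 | h0
  · have key : ∀ r ∈ P, LL f r = LL f qq → DD f r = DD f qq := by
      intro r hr hL
      refine h.bad hr hL (t := 1/2) (by norm_num) (by norm_num) ?_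
      rw [h0]; apply h.L_le
      exact h.cvx (interior_subset h.qint) hr (by norm_num) (by norm_num) (by norm_num)
    have h1 := key (-qq) (h.symm _ (interior_subset h.qint)) (LL_neg f qq)
    rw [DD_neg] at h1
    rw [key r hr hL]; linarith
  set C := FCT.cl P f (LL f qq) with hC
  have hr0 : rr C 0 = qq := h.axis_eq le_rfl h0 one_pos (interior_subset h.qint) rfl
  have hcont := h.rr_cont h0
  have key := ivt_lemma (h := fun θ => DD f (rr C θ)) (c := DD f qq)
    (by
      intro θ _
      have hs := h.rr_spec le_rfl h0 θ
      exact ((h.contD (h.level_int h0 hs.1 hs.2.ge)).comp_of_eq hcont.continuousAt rfl).continuousWithinAt)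
    (by rw [hr0]) (by rw [h.rr_pi le_rfl h0, ← hC, hr0, DD_neg])
    (by
      intro θ hθ h1 h2
      have hs := h.rr_spec le_rfl h0 θ
      refine h.deriv_zero (h.level_int h0 hs.1 hs.2.ge) ?_ hcont.continuousAt (h.rr_bigO h0 θ)
        (fun x => (h.rr_spec le_rfl h0 x).1) (fun x => (h.rr_spec le_rfl h0 x).2) h1 h2
      have := Real.sin_pos_of_mem_Ioo hθ
      have h3 := h.cl_gpos h0 (ee_ne θ)
      change 0 < (gauge (FCT.cl P f (LL f qq)) (ee θ))⁻¹ * Real.sin θ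
      positivity)
  rcases le_total 0 r.2 with hb | hb
  · obtain ⟨θ, hθ, e⟩ := h.rr_surj le_rfl h0 hr hL hb
    rw [← e]; exact key θ hθ
  · obtain ⟨θ, hθ, e⟩ := h.rr_surj le_rfl h0 (h.symm _ hr) (by rw [LL_neg]; exact hL) (by simpa using hb)
    have := key θ hθ
    simp only [hC, e] at this
    rw [DD_neg] at this; linarith

/-- final reflection statement -/
lemma reflA (h : FC P f) (s : ℝ) : ∃ β : ℝ, ln s β ∈ P ∧ LL f (ln s β) = LL f qq ∧
    ∀ b, ln s b ∈ P → ln s (β - b) ∈ P ∧ LL f (ln s (β - b)) = LL f (ln s b) ∧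
      DD f (ln s (β - b)) = - DD f (ln s b) := by
  obtain ⟨β, h1, h2, h3⟩ := h.reflLD s
  refine ⟨β, h1, h2, fun b hb => ?_⟩
  obtain ⟨k1, k2, k3⟩ := h3 b hb
  rw [h.partA (interior_subset h.qint) rfl, h.partA h1 h2] at k3
  exact ⟨k1, k2, by linarith⟩

end FC
end FCT

namespace FCT
open Filter Topology

namespace FC
variable {P : Set (ℝ × ℝ)} {f : ℝ × ℝ → ℝ}

lemma between_L (h : FC P f) {s β b : ℝ} (hβ1 : ln s β ∈ P) (hβ2 : LL f (ln s β) = LL f qq)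
    (hb : 0 ≤ b * (β - b)) : LL f qq ≤ LL f (ln s b) := by
  have hq : ln s 0 ∈ P := by rw [ln_zero]; exact interior_subset h.qint
  rcases lt_trichotomy b 0 with h0 | h0 | h0
  · rcases eq_or_ne b β with h1 | h1
    · rw [h1, hβ2]
    · have h2 : β < b := lt_of_le_of_ne (by nlinarith) (Ne.symm h1)
      have := (h.lineL hβ1 hq h2 h0).2
      rw [ln_zero, hβ2] at this
      nlinarith
  · rw [h0, ln_zero]
  · rcases eq_or_ne b β with h1 | h1
    · rw [h1, hβ2]
    · have h2 : b < β := lt_of_le_of_ne (by nlinarith) h1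
      have := (h.lineL hq hβ1 h0 h2).2
      rw [ln_zero, hβ2] at this
      nlinarith

lemma drift (h : FC P f) {ε : ℝ} (hε : ε = 1 ∨ ε = -1) {y : ℝ × ℝ} {l v : ℝ} (hy : y ∈ P)
    (hb : 0 < ε * y.2) (hL : LL f y = l) (hD : DD f y = v) (hl0 : 0 < l) (hl : l < LL f qq) :
    ∃ a ≤ (-1:ℝ), (a, (0:ℝ)) ∈ P ∧ LL f (a, 0) = l ∧ DD f (a, 0) = v := by
  have hε2 : ε * ε = 1 := by rcases hε with rfl | rfl <;> norm_num
  have hε0 : ε ≠ 0 := by rintro rfl; norm_num at hε2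
  obtain ⟨B, hB⟩ := h.comp.isBounded.exists_norm_le
  have hB' : ∀ y ∈ P, ε * y.2 ≤ |B| + 1 := by
    intro y hy
    have h1 : |y.2| ≤ ‖y‖ := norm_snd_le y
    have h2 := hB y hy
    have h3 := le_abs_self B
    have h4 : ε * y.2 ≤ |y.2| := by
      rcases hε with rfl | rfl
      · rw [one_mul]; exact le_abs_self _
      · rw [neg_one_mul]; exact neg_le_abs _
    linarith
  set M := |B| + 1
  have hM : 0 < M := by positivity
  have step : ∀ n : ℕ, ∃ z : ℝ × ℝ, z ∈ P ∧ 0 < ε * z.2 ∧ LL f z = l ∧ DD f z = v ∧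
      (z.1 + 1) / (ε * z.2) ≤ (y.1 + 1) / (ε * y.2) - n * (2 / M) := by
    intro n
    induction n with
    | zero => exact ⟨y, hy, hb, hL, hD, by simp⟩
    | succ n ih =>
      obtain ⟨z, hz, hzb, hzL, hzD, hzt⟩ := ih
      have hz2 : z.2 ≠ 0 := by intro h0; rw [h0] at hzb; simp at hzb
      have e := eq_ln hz2
      set s := (z.1 - 1) / z.2 with hs
      set b := z.2 with hbd
      obtain ⟨β, hβ1, hβ2, hβ⟩ := h.reflA s
      have hz' := hz
      rw [e] at hz' hzL hzD
      obtain ⟨k1, k2, k3⟩ := hβ b hz'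
      have hpos : 0 < ε * (b - β) := by
        by_contra! hn
        have h1 : 0 ≤ b * (β - b) := by
          have : b * (β - b) = -((ε * b) * (ε * (b - β))) := by linear_combination (b * (b - β)) * hε2
          rw [this]; nlinarith
        have := h.between_L hβ1 hβ2 h1
        linarith
      refine ⟨-ln s (β - b), h.symm _ k1, ?_, by rw [LL_neg, k2, hzL], by rw [DD_neg, k3, hzD, neg_neg], ?_⟩
      · simp only [ln, Prod.snd_neg]; linarith
      · have hbβ : b - β ≠ 0 := by intro h0; rw [h0] at hpos; simp at hpos
        have e1 : ((-ln s (β - b)).1 + 1) / (ε * (-ln s (β - b)).2) = s / ε := by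
          simp only [ln, Prod.snd_neg, Prod.fst_neg]
          rw [show -(β - b) = b - β by ring, show -(1 + s * (β - b)) + 1 = s * (b - β) by ring]
          field_simp
        have hz1 : z.1 = 1 + s * b := by rw [hs]; field_simp; ring
        have e2 : (z.1 + 1) / (ε * b) = 2 / (ε * b) + s / ε := by
          rw [hz1]; field_simp; ring
        have e3 : 2 / M ≤ 2 / (ε * b) := by
          apply div_le_div_of_nonneg_left (by norm_num) hzb (hB' z hz)
        rw [e1]; rw [e2] at hzt
        push_cast; linarith
  choose z hzP hzb hzL hzD hzt using step
  obtain ⟨w, hw, φ, hφ, hlim⟩ := h.comp.tendsto_subseq hzP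
  have l1 : Tendsto (fun n => (z (φ n)).1) atTop (𝓝 w.1) := (continuous_fst.tendsto w).comp hlim
  have l2 : Tendsto (fun n => (z (φ n)).2) atTop (𝓝 w.2) := (continuous_snd.tendsto w).comp hlim
  have hw2 : 0 ≤ ε * w.2 := ge_of_tendsto' (l2.const_mul ε) fun n => (hzb (φ n)).le
  have hN : ∀ N : ℝ, w.1 + 1 ≤ -N * (ε * w.2) := by
    intro N
    refine le_of_tendsto_of_tendsto (l1.add_const 1) ((l2.const_mul ε).const_mul (-N)) ?_
    have t1 : Tendsto (fun n : ℕ => (φ n : ℝ) * (2 / M)) atTop atTop :=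
      (tendsto_natCast_atTop_atTop.comp hφ.tendsto_atTop).atTop_mul_const (by positivity)
    filter_upwards [t1.eventually_ge_atTop (N + (y.1 + 1) / (ε * y.2))] with n hn
    have h1 := hzt (φ n)
    have h2 : (z (φ n)).1 + 1 = ((z (φ n)).1 + 1) / (ε * (z (φ n)).2) * (ε * (z (φ n)).2) := by
      rw [div_mul_cancel₀ _ (hzb (φ n)).ne']
    rw [h2]
    exact mul_le_mul_of_nonneg_right (by linarith) (hzb (φ n)).le
  have hwz : w.2 = 0 := by
    by_contra h0
    have h1 : 0 < ε * w.2 := lt_of_le_of_ne hw2 (by simp [hε0]; exact fun h => h0 h)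
    have := hN (-(w.1 + 1 - 1) / (ε * w.2))
    have e : -(-(w.1 + 1 - 1) / (ε * w.2)) * (ε * w.2) = w.1 := by field_simp; ring
    linarith
  have hw1 : w.1 ≤ -1 := by have := hN 0; linarith
  have ew : w = (w.1, 0) := Prod.ext rfl hwz
  have hcl : l ≤ LL f w := by
    have := (h.cl l).mem_of_tendsto hlim (Eventually.of_forall fun n => ⟨hzP _, (hzL (φ n)).ge⟩)
    exact this.2
  have hInt0 : w ∈ interior P := by
    by_contra hn
    have := h.ne w.1 (by rw [← ew]; exact hw) (by rw [← ew]; exact hn)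
    rw [← ew] at this
    unfold LL at hcl
    linarith
  refine ⟨w.1, hw1, by rw [← ew]; exact hw, ?_, ?_⟩
  · rw [← ew]
    refine tendsto_nhds_unique ((h.contL hInt0).tendsto.comp hlim) ?_
    exact tendsto_const_nhds.congr (fun n => (hzL (φ n)).symm)
  · rw [← ew]
    refine tendsto_nhds_unique ((h.contD hInt0).tendsto.comp hlim) ?_
    exact tendsto_const_nhds.congr (fun n => (hzD (φ n)).symm)

lemma axis_unique (h : FC P f) {a c : ℝ} (hac : a < c) (hc1 : c ≤ -1)
    (ha : (a, (0:ℝ)) ∈ P) (hal : LL f (a, 0) < LL f qq) :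
    LL f (a, 0) < LL f (c, 0) := by
  have hp : 0 < -1 - a := by linarith
  have h1 := (concave_seg h.concL ha (h.symm _ (interior_subset h.qint)) (x := (-1 - c)/(-1-a))
    (y := (c - a)/(-1-a)) (w := (c,0)) (by apply div_nonneg <;> linarith) (by apply div_nonneg <;> linarith)
    (by field_simp; ring) (by
      unfold qq; ext
      · simp; field_simp; ring
      · simp)).2
  rw [LL_neg] at h1
  have h2 : 0 < (c - a)/(-1-a) := by apply div_pos <;> linarith
  have h3 : (-1 - c)/(-1-a) + (c - a)/(-1-a) = 1 := by field_simp; ring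
  have h4 := mul_lt_mul_of_pos_left hal h2
  have h5 : (-1 - c)/(-1-a) * LL f (a,0) + (c - a)/(-1-a) * LL f (a,0) = LL f (a,0) := by
    rw [← add_mul, h3, one_mul]
  linarith

lemma outside_ne (h : FC P f) {y : ℝ × ℝ} (hy : y ∈ P) (hb : y.2 ≠ 0) (hl0 : 0 < LL f y)
    (hl : LL f y < LL f qq) : DD f y = 0 := by
  have key : ∃ ε : ℝ, (ε = 1 ∨ ε = -1) ∧ 0 < ε * y.2 := by
    rcases lt_or_gt_of_ne hb with h1 | h1
    · exact ⟨-1, Or.inr rfl, by linarith⟩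
    · exact ⟨1, Or.inl rfl, by linarith⟩
  obtain ⟨ε, hε, hεb⟩ := key
  obtain ⟨a, ha1, ha2, ha3, ha4⟩ := h.drift hε hy hεb rfl rfl hl0 hl
  obtain ⟨c, hc1, hc2, hc3, hc4⟩ := h.drift (ε := -ε) (by rcases hε with rfl | rfl <;> norm_num)
    (h.symm _ hy) (by simpa using hεb) (LL_neg f y) (DD_neg f y) hl0 hl
  have hac : a = c := by
    rcases lt_trichotomy a c with h1 | h1 | h1
    · have := h.axis_unique h1 hc1 ha2 (by rw [ha3]; exact hl); linarith
    · exact h1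
    · have := h.axis_unique h1 ha1 hc2 (by rw [hc3]; exact hl); linarith
  rw [hac] at ha4
  linarith

lemma outside (h : FC P f) {y : ℝ × ℝ} (hy : y ∈ interior P) (hl : LL f y < LL f qq) :
    DD f y = 0 := by
  by_cases hb : y.2 = 0
  · have hcont : Continuous fun t : ℝ => y + (0, t) := by fun_prop
    have hc0 : Tendsto (fun t : ℝ => y + (0, t)) (𝓝[≠] 0) (𝓝 y) := by
      have := hcont.tendsto 0
      simp only [Prod.mk_zero_zero, add_zero] at this
      exact this.mono_left nhdsWithin_le_nhds
    have h1 := (h.contD hy).tendsto.comp hc0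
    have h2 : Tendsto (DD f ∘ fun t : ℝ => y + (0, t)) (𝓝[≠] 0) (𝓝 0) := by
      refine tendsto_const_nhds.congr' ?_
      filter_upwards [hc0.eventually (isOpen_interior.mem_nhds hy),
        hc0.eventually ((h.contL hy).eventually (gt_mem_nhds hl)), self_mem_nhdsWithin] with t t1 t2 t3
      refine (h.outside_ne (interior_subset t1) ?_ (h.pos _ t1) t2).symm
      simpa [hb] using t3
    exact tendsto_nhds_unique h1 h2
  · exact h.outside_ne (interior_subset hy) hb (h.pos _ hy) hl

/-- reflections on an inner level curve -/
lemma inner_refl (h : FC P f) {y : ℝ × ℝ} (hy : y ∈ P) (hl : LL f qq < LL f y) (hb : 0 < y.2) :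
    ∃ b', 0 < b' ∧ ln ((y.1 - 1)/y.2) b' ∈ P ∧ LL f (ln ((y.1 - 1)/y.2) b') = LL f y ∧
      DD f (ln ((y.1 - 1)/y.2) b') = - DD f y := by
  have e := eq_ln hb.ne'
  set s := (y.1 - 1)/y.2
  obtain ⟨β, hβ1, hβ2, hβ⟩ := h.reflA s
  have hy' := hy
  rw [e] at hy'
  obtain ⟨k1, k2, k3⟩ := hβ _ hy'
  rw [← e] at k2 k3
  refine ⟨β - y.2, ?_, k1, k2, k3⟩
  have h1 := h.opp k1 hy' (by rw [k2]; exact hl.le) (by rw [← e]; exact hl)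
  rcases eq_or_ne (β - y.2) 0 with h2 | h2
  · rw [h2, ln_zero] at k2; linarith
  · exact lt_of_le_of_ne (by nlinarith) (Ne.symm h2)

/-- same through `-q`, for `b > 0` -/
lemma inner_refl' (h : FC P f) {y : ℝ × ℝ} (hy : y ∈ P) (hl : LL f qq < LL f y) (hb : 0 < y.2) :
    ∃ b', 0 < b' ∧ -ln ((y.1 + 1)/y.2) (-b') ∈ P ∧ LL f (-ln ((y.1 + 1)/y.2) (-b')) = LL f y ∧
      DD f (-ln ((y.1 + 1)/y.2) (-b')) = - DD f y := by
  have e : -y = ln ((y.1 + 1)/y.2) (-y.2) := by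
    unfold ln; ext
    · simp; field_simp; ring
    · simp
  set s := (y.1 + 1)/y.2
  obtain ⟨β, hβ1, hβ2, hβ⟩ := h.reflA s
  have hy' := h.symm _ hy
  rw [e] at hy'
  obtain ⟨k1, k2, k3⟩ := hβ _ hy'
  rw [← e, LL_neg] at k2
  rw [← e, DD_neg] at k3
  have h1 := h.opp k1 hy' (by rw [k2]; exact hl.le) (by rw [← e, LL_neg]; exact hl)
  refine ⟨-(β - - y.2), ?_, ?_, ?_, ?_⟩
  · rcases eq_or_ne (β - -y.2) 0 with h2 | h2
    · rw [h2, ln_zero] at k2; linarith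
    · have : β - -y.2 < 0 := lt_of_le_of_ne (by nlinarith) h2
      linarith
  · rw [neg_neg]; exact h.symm _ k1
  · rw [neg_neg, LL_neg]; exact k2
  · rw [neg_neg, DD_neg, k3, neg_neg]

set_option maxHeartbeats 1000000 in
lemma inside_claim (h : FC P f) {l v : ℝ} (hl1 : LL f qq < l) (hl2 : l < LL f 0) (hv : 0 < v)
    (hax : ∀ a, (a, (0:ℝ)) ∈ P → LL f (a, 0) = l → |DD f (a, 0)| ≠ v) {y₀ : ℝ × ℝ} (hy₀ : y₀ ∈ P)
    (hL₀ : LL f y₀ = l) (hD₀ : |DD f y₀| = v) (hb₀ : 0 ≤ y₀.2) : False := by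
  set C := FCT.cl P f l with hC
  have hCint : ∀ y ∈ C, y ∈ interior P := fun y hy =>
    h.level_int (by linarith) hy.1 (by linarith [hy.2])
  have hcL : ContinuousOn (LL f) C := fun y hy => (h.contL (hCint y hy)).continuousWithinAt
  have hcD : ContinuousOn (DD f) C := fun y hy => (h.contD (hCint y hy)).continuousWithinAt
  set W := {y | y ∈ C ∧ (LL f y, |DD f y|, y.2) ∈ ({l} ×ˢ ({v} ×ˢ Ici 0) : Set (ℝ × ℝ × ℝ))} with hW
  have hWm : ∀ y, y ∈ W ↔ y ∈ P ∧ LL f y = l ∧ |DD f y| = v ∧ 0 ≤ y.2 := by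
    intro y
    simp only [hW, hC, FCT.cl, mem_ofPred_eq, mem_prod, mem_singleton_iff, mem_Ici]
    constructor
    · rintro ⟨⟨h1, h2⟩, h3, h4, h5⟩; exact ⟨h1, h3, h4, h5⟩
    · rintro ⟨h1, h3, h4, h5⟩; exact ⟨⟨h1, h3.ge⟩, h3, h4, h5⟩
  have hWcl : IsClosed W := by
    have : ContinuousOn (fun y : ℝ × ℝ => (LL f y, |DD f y|, y.2)) C := by fun_prop
    exact this.preimage_isClosed_of_isClosed (h.cl l)
      (isClosed_singleton.prod (isClosed_singleton.prod isClosed_Ici))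
  have hWc : IsCompact W := (h.cl_comp l).of_isClosed_subset hWcl (fun y hy => hy.1)
  have hWne : W.Nonempty := ⟨y₀, (hWm _).2 ⟨hy₀, hL₀, hD₀, hb₀⟩⟩
  have hWb : ∀ y ∈ W, 0 < y.2 := by
    intro y hy
    obtain ⟨h1, h2, h3, h4⟩ := (hWm y).1 hy
    refine lt_of_le_of_ne h4 fun h5 => ?_
    have e : y = (y.1, 0) := Prod.ext rfl h5.symm
    rw [e] at h1 h2 h3
    exact hax _ h1 h2 h3
  have hs : ContinuousOn (fun y : ℝ × ℝ => (y.1 - 1) / y.2) W :=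
    ContinuousOn.div (by fun_prop) (by fun_prop) (fun y hy => (hWb y hy).ne')
  have ht : ContinuousOn (fun y : ℝ × ℝ => (y.1 + 1) / y.2) W :=
    ContinuousOn.div (by fun_prop) (by fun_prop) (fun y hy => (hWb y hy).ne')
  obtain ⟨y, hy, hymin⟩ := hWc.exists_isMinOn hWne hs
  obtain ⟨w, hw, hwmax⟩ := hWc.exists_isMaxOn hWne ht
  have hymin : ∀ z ∈ W, (y.1 - 1)/y.2 ≤ (z.1 - 1)/z.2 := fun z hz => hymin hz
  have hwmax : ∀ z ∈ W, (z.1 + 1)/z.2 ≤ (w.1 + 1)/w.2 := fun z hz => hwmax hz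
  have hyb := hWb y hy
  have hwb := hWb w hw
  obtain ⟨y1, y2, y3, y4⟩ := (hWm y).1 hy
  obtain ⟨w1, w2, w3, w4⟩ := (hWm w).1 hw
  obtain ⟨b', hb'0, k1, k2, k3⟩ := h.inner_refl y1 (by linarith) hyb
  obtain ⟨c', hc'0, m1, m2, m3⟩ := h.inner_refl' w1 (by linarith) hwb
  have ey := eq_ln hyb.ne'
  have ew : w = -ln ((w.1 + 1)/w.2) (-w.2) := by
    unfold ln; ext
    · simp; field_simp; ring
    · simp
  have hDy : DD f y ≠ 0 := by intro h0; rw [h0, abs_zero] at y3; linarith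
  have hDw : DD f w ≠ 0 := by intro h0; rw [h0, abs_zero] at w3; linarith
  set σ := (y.1 - 1)/y.2 with hσ
  set τ := (w.1 + 1)/w.2 with hτ
  -- any point of W on the line σ / τ
  have hσb : ∀ b, 0 < b → ln σ b ∈ W → 2 / b ≤ τ - σ := by
    intro b hb hbW
    have := hwmax _ hbW
    have e : ((ln σ b).1 + 1) / (ln σ b).2 = σ + 2 / b := by
      unfold ln; simp; field_simp; ring
    rw [e] at this; linarith
  have hτb : ∀ b, 0 < b → -ln τ (-b) ∈ W → 2 / b ≤ τ - σ := by
    intro b hb hbW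
    have := hymin _ hbW
    have e : ((-ln τ (-b)).1 - 1) / (-ln τ (-b)).2 = τ - 2 / b := by
      unfold ln; simp; field_simp; ring
    rw [e] at this; linarith
  have hy'W : ln σ b' ∈ W := (hWm _).2 ⟨k1, by rw [k2, y2], by rw [k3, abs_neg, y3], hb'0.le⟩
  have hw'W : -ln τ (-c') ∈ W := (hWm _).2 ⟨m1, by rw [m2, w2], by rw [m3, abs_neg, w3], by
    simp [ln]; exact hc'0.le⟩
  have hyW : ln σ y.2 ∈ W := by rw [← ey]; exact hy
  have hwW : -ln τ (-w.2) ∈ W := by rw [← ew]; exact hw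
  have hbne : y.2 ≠ b' := by
    intro h0; rw [← h0, ← ey] at k3; apply hDy; linarith
  have hcne : w.2 ≠ c' := by
    intro h0; rw [← h0, ← ew] at m3; apply hDw; linarith
  -- ordered pairs
  obtain ⟨b1, b2, hb1, hb12, hb1W, hb2W⟩ : ∃ b1 b2, 0 < b1 ∧ b1 < b2 ∧ ln σ b1 ∈ W ∧ ln σ b2 ∈ W := by
    rcases lt_or_gt_of_ne hbne with h0 | h0
    · exact ⟨_, _, hyb, h0, hyW, hy'W⟩
    · exact ⟨_, _, hb'0, h0, hy'W, hyW⟩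
  obtain ⟨c1, c2, hc1, hc12, hc1W, hc2W⟩ : ∃ b1 b2, 0 < b1 ∧ b1 < b2 ∧ -ln τ (-b1) ∈ W ∧ -ln τ (-b2) ∈ W := by
    rcases lt_or_gt_of_ne hcne with h0 | h0
    · exact ⟨_, _, hwb, h0, hwW, hw'W⟩
    · exact ⟨_, _, hc'0, h0, hw'W, hwW⟩
  have hd : 0 < τ - σ := lt_of_lt_of_le (by positivity) (hσb _ hb1 hb1W)
  set x := 2 / (τ - σ) with hx
  have hx0 : 0 < x := by positivity
  have hxd : x * (τ - σ) = 2 := by rw [hx]; field_simp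
  have hxb1 : x ≤ b1 := by
    have := hσb _ hb1 hb1W
    rw [div_le_iff₀ hb1] at this
    rw [hx, div_le_iff₀ hd]; linarith
  have hxc1 : x ≤ c1 := by
    have := hτb _ hc1 hc1W
    rw [div_le_iff₀ hc1] at this
    rw [hx, div_le_iff₀ hd]; linarith
  -- X in triangle
  have hα : 0 < x / (b2 - x) := div_pos hx0 (by linarith)
  have hβ : 0 < x / (c2 - x) := div_pos hx0 (by linarith)
  set α := x / (b2 - x) with hαd
  set β := x / (c2 - x) with hβd
  have hαe : α * b2 = x + α * x := by rw [hαd]; field_simp [show b2 - x ≠ 0 by linarith]; ring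
  have hβe : β * c2 = x + β * x := by rw [hβd]; field_simp [show c2 - x ≠ 0 by linarith]; ring
  obtain ⟨p1, p2, -, -⟩ := (hWm _).1 hb2W
  obtain ⟨q1, q2, -, -⟩ := (hWm _).1 hc2W
  have hS : 0 < α + β := by positivity
  have s1 := concave_seg h.concL p1 q1 (x := α/(α+β)) (y := β/(α+β)) (by positivity) (by positivity)
    (by field_simp) rfl
  have s2 := h.ray s1.1 (t := (α+β)/(α+β+2)) (by positivity)
    (by rw [div_le_one (by positivity)]; linarith)
  have eX : ((α+β)/(α+β+2)) • ((α/(α+β)) • ln σ b2 + (β/(α+β)) • -ln τ (-c2)) = ln σ x := by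
    have hτe : τ * x = 2 + σ * x := by linarith
    unfold ln; ext
    · simp
      field_simp
      linear_combination σ * hαe + τ * hβe + (1 + β) * hτe
    · simp; field_simp
      linear_combination hαe + hβe
  rw [eX] at s2
  rw [p2, q2] at s1
  have hLX : l < LL f (ln σ x) := by
    refine lt_of_lt_of_le ?_ s2.2
    have h5 : α / (α + β) * l + β / (α + β) * l = l := by field_simp
    have h6 := s1.2
    rw [h5] at h6
    have h7 : (α+β)/(α+β+2) * l ≤ (α+β)/(α+β+2) * LL f ((α/(α+β)) • ln σ b2 + (β/(α+β)) • -ln τ (-c2)) :=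
      mul_le_mul_of_nonneg_left h6 (by positivity)
    have h8 : 0 < 1 - (α+β)/(α+β+2) := by
      rw [sub_pos, div_lt_one (by positivity)]; linarith
    have h9 := mul_lt_mul_of_pos_left hl2 h8
    have h10 : (α+β)/(α+β+2) * l + (1 - (α+β)/(α+β+2)) * l = l := by ring
    linarith
  obtain ⟨p1', p2', -, -⟩ := (hWm _).1 hb1W
  rcases eq_or_lt_of_le hxb1 with h10 | h10
  · rw [h10, p2'] at hLX; exact lt_irrefl _ hLX
  · have := (h.lineL s2.1 p1 h10 hb12).2
    rw [p2, p2'] at this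
    have h11 := mul_lt_mul_of_pos_left hLX (sub_pos.2 hb12)
    have h12 : (b2 - b1) * l + (b1 - x) * l = (b2 - x) * l := by ring
    linarith

lemma inside (h : FC P f) {y : ℝ × ℝ} (hy : y ∈ P) (hl1 : LL f qq < LL f y)
    (hl2 : LL f y < LL f 0) : DD f y = 0 := by
  set l := LL f y with hl
  set C := FCT.cl P f l with hC
  have hcont := h.rr_cont hl2
  have hax0 : (rr C 0).2 = 0 := by rw [rr_zero]
  have hax : ∀ a, (a, (0:ℝ)) ∈ P → LL f (a, 0) = l → |DD f (a, 0)| = |DD f (rr C 0)| := by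
    intro a ha hL
    rcases lt_trichotomy a 0 with h0 | h0 | h0
    · have := h.axis_eq hl1.le hl2 (a := -a) (by linarith)
        (by have := h.symm _ ha; simpa using this)
        (by have := LL_neg f (a, 0); simp at this; rw [this]; exact hL)
      rw [← hC] at this
      rw [this]
      have h2 := DD_neg f (a, 0)
      simp at h2
      rw [h2, abs_neg]
    · subst h0
      have : ((0:ℝ),(0:ℝ)) = 0 := rfl
      rw [this] at hL; linarith
    · rw [h.axis_eq hl1.le hl2 h0 ha hL]
  have hr0 := h.rr_spec hl1.le hl2
  have hc0 : DD f (rr C 0) = 0 := by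
    by_contra hne
    have hpos : 0 < |DD f (rr C 0)| := abs_pos.2 hne
    have hco : ContinuousOn (fun θ => DD f (rr C θ)) (uIcc 0 Real.pi) := by
      intro θ _
      exact ((h.contD (h.level_int (by linarith) (hr0 θ).1 (by linarith [(hr0 θ).2]))).comp_of_eq
        hcont.continuousAt rfl).continuousWithinAt
    have hiv := intermediate_value_uIcc hco
    have hmem : DD f (rr C 0) / 2 ∈ uIcc (DD f (rr C 0)) (DD f (rr C Real.pi)) := by
      rw [h.rr_pi hl1.le hl2, ← hC, DD_neg]
      rcases le_total (DD f (rr C 0)) 0 with h7 | h7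
      · rw [uIcc_of_le (by linarith)]; constructor <;> linarith
      · rw [uIcc_of_ge (by linarith)]; constructor <;> linarith
    obtain ⟨θ, hθ, hθ2⟩ := hiv hmem
    rw [uIcc_of_le Real.pi_pos.le] at hθ
    simp only at hθ2
    refine h.inside_claim hl1 hl2 (v := |DD f (rr C 0)| / 2) (by linarith) ?_ (hr0 θ).1 (hr0 θ).2
      (by rw [← hC, hθ2, abs_div, abs_two]) ?_
    · intro a h1 h2 h3; rw [hax a h1 h2] at h3; linarith
    · have := Real.sin_nonneg_of_mem_Icc hθ
      have h3 := h.cl_gpos hl2 (ee_ne θ)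
      change 0 ≤ (gauge (FCT.cl P f l) (ee θ))⁻¹ * Real.sin θ
      positivity
  by_contra hne
  have hpos : 0 < |DD f y| := abs_pos.2 hne
  have hax' : ∀ a, (a, (0:ℝ)) ∈ P → LL f (a, 0) = l → |DD f (a, 0)| ≠ |DD f y| := by
    intro a h1 h2; rw [hax a h1 h2, hc0, abs_zero]; exact hpos.ne
  rcases le_total 0 y.2 with hb | hb
  · exact h.inside_claim hl1 hl2 hpos hax' hy rfl rfl hb
  · exact h.inside_claim hl1 hl2 hpos hax' (h.symm _ hy) (LL_neg f y) (by rw [DD_neg, abs_neg])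
      (by simpa using hb)

lemma top (h : FC P f) (h0 : LL f qq < LL f 0) {y : ℝ × ℝ} (hy : y ∈ P)
    (hl : LL f y = LL f 0) : DD f y = 0 := by
  by_cases hy0 : y = 0
  · rw [hy0]; exact DD_zero f
  have hcont : Continuous fun t : ℝ => t • y := by fun_prop
  set S := {t : ℝ | t • y ∈ FCT.cl P f (LL f 0)} with hS
  have hScl : IsClosed S := (h.cl _).preimage hcont
  have hSb : BddAbove S := by
    obtain ⟨B, hB⟩ := h.comp.isBounded.exists_norm_le
    refine ⟨B / ‖y‖, fun t ht => ?_⟩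
    have := hB _ ht.1
    rw [norm_smul] at this
    rw [le_div_iff₀ (norm_pos_iff.2 hy0)]
    refine le_trans ?_ this
    exact mul_le_mul_of_nonneg_right (le_abs_self t) (norm_nonneg _)
  have h1S : (1:ℝ) ∈ S := by rw [hS]; simp only [mem_ofPred_eq, one_smul]; exact ⟨hy, hl.ge⟩
  have hτS := hScl.csSup_mem ⟨1, h1S⟩ hSb
  set τ := sSup S with hτ
  have hτ1 : 1 ≤ τ := le_csSup hSb h1S
  have hLτ : LL f (τ • y) = LL f 0 := le_antisymm (h.L_le hτS.1) hτS.2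
  have hInt0 : τ • y ∈ interior P := h.level_int h0 hτS.1 (by linarith)
  have hDτ : DD f (τ • y) = 0 := by
    have hc : Tendsto (fun t : ℝ => t • y) (𝓝[>] τ) (𝓝 (τ • y)) := (hcont.tendsto τ).mono_left nhdsWithin_le_nhds
    refine tendsto_nhds_unique ((h.contD hInt0).tendsto.comp hc) (tendsto_const_nhds.congr' ?_)
    filter_upwards [hc.eventually (isOpen_interior.mem_nhds hInt0),
      hc.eventually ((h.contL hInt0).eventually (lt_mem_nhds (by rw [hLτ]; exact h0))),
      self_mem_nhdsWithin] with t t1 t2 t3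
    refine (h.inside (interior_subset t1) t2 ?_).symm
    by_contra! hn
    have : t ∈ S := ⟨interior_subset t1, hn⟩
    exact absurd (le_csSup hSb this) (by rw [← hτ]; exact not_le.2 t3)
  have hτ0 : 0 < τ := by linarith
  have := h.affD (interior_subset h.zint) hτS.1 (x := 1 - 1/τ) (y := 1/τ)
    (by rw [sub_nonneg, div_le_one hτ0]; exact hτ1) (by positivity) (by ring) hLτ.symm
    (by
      apply h.L_le
      refine h.cvx (interior_subset h.zint) hτS.1 (by rw [sub_nonneg, div_le_one hτ0]; exact hτ1)
        (by positivity) (by ring))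
  rw [smul_zero, zero_add, smul_smul, one_div_mul_cancel hτ0.ne', one_smul, hDτ, DD_zero] at this
  linarith

theorem main (h : FC P f) {y : ℝ × ℝ} (hy : y ∈ interior P) : f y = f (-y) := by
  have key : DD f y = 0 := by
    rcases lt_trichotomy (LL f y) (LL f qq) with h1 | h1 | h1
    · exact h.outside hy h1
    · exact h.partA (interior_subset hy) h1
    · rcases eq_or_lt_of_le (h.L_le (interior_subset hy)) with h2 | h2
      · exact h.top (by linarith) (interior_subset hy) h2
      · exact h.inside (interior_subset hy) h1 h2
  unfold DD at key; linarith

end FC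
end FCT

namespace FCT
open Filter Topology

abbrev X3 := (ℝ × ℝ) × ℝ

lemma diff_of_implicit {G : X3 → ℝ} (hom : ∀ (t : ℝ) (x : X3), 0 ≤ t → G (t • x) = t * G x)
    {ε : ℝ} (hε : ε ≠ 0) {f : ℝ × ℝ → ℝ} {q : ℝ × ℝ}
    (hG : DifferentiableAt ℝ G (0, ε)) (hev : ∀ᶠ y in 𝓝 q, G (y - q, ε * f y) = 1)
    (hf : 0 < f q) (hO : (fun y => f y - f q) =O[𝓝 q] fun y => y - q) : DifferentiableAt ℝ f q := by
  set ρ := f q with hρ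
  have hρ0 := hf
  -- differentiable at (0, ε * ρ)
  have hG' : DifferentiableAt ℝ G (0, ε * ρ) := by
    have e : G = fun x => ρ * G (ρ⁻¹ • x) := by
      ext x; rw [hom _ _ (by positivity)]; field_simp
    have e2 : ρ⁻¹ • ((0 : ℝ × ℝ), ε * ρ) = (0, ε) := by
      ext <;> simp; field_simp
    rw [e]
    have h1 : DifferentiableAt ℝ (fun x : X3 => ρ⁻¹ • x) (0, ε * ρ) := by fun_prop
    have h2 : DifferentiableAt ℝ G ((fun x : X3 => ρ⁻¹ • x) (0, ε * ρ)) := by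
      simp only [e2]; exact hG
    exact (h2.comp _ h1).const_mul ρ
  obtain ⟨φ, hφ⟩ := hG'
  have hGρ : G (0, ε * ρ) = 1 := by
    have := hev.self_of_nhds; simpa using this
  -- Euler
  have hE : φ (0, ε * ρ) = 1 := by
    have d1 : HasDerivAt (fun t : ℝ => t • ((0 : ℝ × ℝ), ε * ρ)) (0, ε * ρ) 1 := by
      simpa using (hasDerivAt_id (1:ℝ)).smul_const ((0 : ℝ × ℝ), ε * ρ)
    have hφ' : HasFDerivAt G φ ((1:ℝ) • ((0 : ℝ × ℝ), ε * ρ)) := by rw [one_smul]; exact hφ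
    have d2 := hφ'.comp_hasDerivAt (1:ℝ) d1
    have d3 : HasDerivAt (fun t : ℝ => t * G (0, ε * ρ)) 1 1 := by
      simpa [hGρ] using (hasDerivAt_id (1:ℝ)).mul_const (G (0, ε * ρ))
    refine d2.unique (d3.congr_of_eventuallyEq ?_)
    filter_upwards [lt_mem_nhds (zero_lt_one (α := ℝ))] with t ht
    exact hom t _ ht.le
  have hE' : φ (0, ε) * ρ = 1 := by
    have : ((0 : ℝ × ℝ), ε * ρ) = ρ • (0, ε) := by ext <;> simp; ring
    rw [this, map_smul, smul_eq_mul] at hE; linarith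
  -- little o
  have hcf : Tendsto (fun y => ((y - q, ε * f y) : X3)) (𝓝 q) (𝓝 (0, ε * ρ)) := by
    have h1 : Tendsto (fun y => y - q) (𝓝 q) (𝓝 0) := by
      have : Tendsto (fun y => y - q) (𝓝 q) (𝓝 (q - q)) := tendsto_id.sub_const q
      simpa using this
    have h2 : Tendsto (fun y => f y - ρ) (𝓝 q) (𝓝 0) := hO.trans_tendsto h1
    have h3 : Tendsto f (𝓝 q) (𝓝 ρ) := by simpa using h2.add_const ρ
    exact h1.prodMk_nhds (h3.const_mul ε)
  have o1 := (hasFDerivAt_iff_isLittleO.1 hφ).comp_tendsto hcf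
  have bigO : ((fun x : X3 => x - (0, ε * ρ)) ∘ fun y => ((y - q, ε * f y) : X3)) =O[𝓝 q] fun y => y - q := by
    have e : ((fun x : X3 => x - (0, ε * ρ)) ∘ fun y => ((y - q, ε * f y) : X3)) =
        fun y => ((y - q, ε * (f y - ρ)) : X3) := by
      ext y <;> simp; ring
    rw [e]
    exact (Asymptotics.isBigO_refl _ _).prod_left (hO.const_mul_left ε)
  have o2 := (o1.trans_isBigO bigO).const_mul_left (-ρ)
  refine ⟨(-ρ) • (φ.comp (ContinuousLinearMap.inl ℝ (ℝ × ℝ) ℝ)), ?_⟩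
  rw [hasFDerivAt_iff_isLittleO]
  refine o2.congr' ?_ (EventuallyEq.refl _ _)
  filter_upwards [hev] with y hy
  simp only [Function.comp_apply, hy, hGρ]
  have e : ((y - q, ε * f y) : X3) - (0, ε * ρ) = (y - q, 0) + (f y - ρ) • (0, ε) := by
    ext <;> simp; ring
  rw [e, map_add, map_smul]
  simp only [smul_eq_mul, ContinuousLinearMap.smul_apply, ContinuousLinearMap.comp_apply,
    ContinuousLinearMap.inl_apply, sub_self, zero_sub]
  rw [← hρ]
  linear_combination (f y - ρ) * hE'

structure Bod (K : Set X3) : Prop where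
  comp : IsCompact K
  cvx : Convex ℝ K
  symm : ∀ x ∈ K, -x ∈ K
  hq : (((1:ℝ),(0:ℝ)),(0:ℝ)) ∈ interior K
  refl : ∀ s : ℝ, ∃ β κ : ℝ, ∀ b z, ((1+s*b, b), z) ∈ K → ((1+s*(β-b), β-b), κ - z) ∈ K
  ne : ∀ a z1 z2, ((a,(0:ℝ)),z1) ∈ K → ((a,(0:ℝ)),z2) ∈ K →
    (∀ a' z', ((a',(0:ℝ)),z') ∈ K → a' ≤ a) → z1 = z2
  g1 : DifferentiableAt ℝ (gauge {x : X3 | x + ((1,0),0) ∈ K}) (0, 1)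
  g2 : DifferentiableAt ℝ (gauge {x : X3 | x + ((1,0),0) ∈ K}) (0, -1)

def tf (K : Set X3) (y : ℝ × ℝ) : ℝ := sSup {z | (y, z) ∈ K}
def pr (K : Set X3) : Set (ℝ × ℝ) := Prod.fst '' K

namespace Bod
variable {K : Set X3}

lemma mem_pr {y : ℝ × ℝ} {z : ℝ} (hz : (y, z) ∈ K) : y ∈ pr K := ⟨_, hz, rfl⟩

lemma bdd (h : Bod K) (y : ℝ × ℝ) : BddAbove {z | (y, z) ∈ K} := by
  obtain ⟨B, hB⟩ := h.comp.isBounded.exists_norm_le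
  exact ⟨B, fun z hz => (le_abs_self z).trans ((norm_snd_le ((y, z) : X3)).trans (hB _ hz))⟩

lemma tf_mem (h : Bod K) {y : ℝ × ℝ} (hy : y ∈ pr K) : (y, tf K y) ∈ K := by
  have hcl : IsClosed {z : ℝ | (y, z) ∈ K} := h.comp.isClosed.preimage (by fun_prop : Continuous fun z : ℝ => (y, z))
  obtain ⟨x, hx, e⟩ := hy
  exact hcl.csSup_mem ⟨x.2, by rw [← e]; exact hx⟩ (h.bdd y)

lemma le_tf (h : Bod K) {y : ℝ × ℝ} {z : ℝ} (hz : (y, z) ∈ K) : z ≤ tf K y := le_csSup (h.bdd y) hz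

lemma tf_le (h : Bod K) {y : ℝ × ℝ} {z : ℝ} (hz : (y, z) ∈ K) : -tf K (-y) ≤ z := by
  have := h.le_tf (y := -y) (z := -z) (by simpa using h.symm _ hz)
  linarith

lemma pr_symm (h : Bod K) : ∀ y ∈ pr K, -y ∈ pr K := by
  rintro y ⟨x, hx, rfl⟩
  exact ⟨-x, h.symm _ hx, rfl⟩

lemma bot_mem (h : Bod K) {y : ℝ × ℝ} (hy : y ∈ pr K) : (y, -tf K (-y)) ∈ K := by
  simpa using h.symm _ (h.tf_mem (h.pr_symm y hy))

lemma mem_of (h : Bod K) {y : ℝ × ℝ} {z : ℝ} (hy : y ∈ pr K) (h1 : -tf K (-y) ≤ z) (h2 : z ≤ tf K y) :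
    (y, z) ∈ K := by
  have hcv : Convex ℝ {z : ℝ | (y, z) ∈ K} := by
    intro a ha b hb s t hs ht hst
    have := h.cvx ha hb hs ht hst
    simpa [← add_smul, hst] using this
  exact hcv.ordConnected.out (h.bot_mem hy) (h.tf_mem hy) ⟨h1, h2⟩

lemma conc (h : Bod K) : ConcaveOn ℝ (pr K) (tf K) := by
  refine ⟨?_, ?_⟩
  · exact h.cvx.linear_image (LinearMap.fst ℝ (ℝ × ℝ) ℝ)
  · intro x hx y hy a b ha hb hab
    have := h.cvx (h.tf_mem hx) (h.tf_mem hy) ha hb hab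
    exact h.le_tf this

lemma int_fst (h : Bod K) {x : X3} (hx : x ∈ interior K) : x.1 ∈ interior (pr K) := by
  have : Prod.fst '' interior K ⊆ interior (pr K) :=
    interior_maximal (image_mono interior_subset) (isOpenMap_fst _ isOpen_interior)
  exact this ⟨x, hx, rfl⟩

lemma zint (h : Bod K) : (0 : X3) ∈ interior K := by
  have hP : -K = K := by
    ext z; constructor
    · intro hz; simpa using h.symm _ hz
    · intro hz; exact h.symm _ hz
  have h1 : interior (-K) = - interior K := by
    have := (Homeomorph.neg X3).preimage_interior K
    exact this.symm
  rw [hP] at h1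
  have h2 : -(((1:ℝ),(0:ℝ)),(0:ℝ)) ∈ interior K := by rw [h1]; simpa using h.hq
  have := h.cvx.interior h.hq h2 (by norm_num : (0:ℝ) ≤ 1/2)
    (by norm_num : (0:ℝ) ≤ 1/2) (by norm_num)
  convert this using 1
  ext <;> simp

lemma tf_pos (h : Bod K) {y : ℝ × ℝ} (hy : (y, (0:ℝ)) ∈ interior K) : 0 < tf K y := by
  have hc : Continuous fun t : ℝ => ((y, t) : X3) := by fun_prop
  have : ∀ᶠ t in 𝓝 (0:ℝ), ((y, t) : X3) ∈ interior K :=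
    hc.continuousAt.eventually (isOpen_interior.mem_nhds hy)
  obtain ⟨t, ht, ht0⟩ := ((this.filter_mono nhdsWithin_le_nhds).and
    (self_mem_nhdsWithin (a := (0:ℝ)) (s := Ioi 0))).exists
  have ht0 : 0 < t := ht0
  exact lt_of_lt_of_le ht0 (h.le_tf (interior_subset ht))

lemma ray_int (h : Bod K) {y : ℝ × ℝ} (hy : y ∈ pr K) {t : ℝ} (ht : 0 ≤ t) (ht1 : t < 1) :
    t • y ∈ interior (pr K) := by
  have := h.conc.1.combo_interior_self_mem_interior (h.int_fst h.zint) hy (by linarith : 0 < 1 - t) ht (by ring)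
  simpa using this

lemma sum_nonneg (h : Bod K) {y : ℝ × ℝ} (hy : y ∈ pr K) : 0 ≤ tf K y + tf K (-y) := by
  have := h.tf_le (h.tf_mem hy); linarith

/-- gauge is one on graph -/
lemma gauge_one (h : Bod K) {y : ℝ × ℝ} {z : ℝ} (hy : y ∈ pr K) (hz : (y,z) ∈ K)
    (hn : (y, z) ∉ interior K) :
    gauge {x : X3 | x + ((1,0),0) ∈ K} (y - (1,0), z) = 1 := by
  set q3 : X3 := ((1,0),0)
  have hpre : {x : X3 | x + q3 ∈ K} = (Homeomorph.addRight q3) ⁻¹' K := rfl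
  have hc : Convex ℝ {x : X3 | x + q3 ∈ K} := by
    intro x hx y hy a b ha hb hab
    have := h.cvx hx hy ha hb hab
    have e : a • (x + q3) + b • (y + q3) = a • x + b • y + q3 := by
      rw [smul_add, smul_add, add_add_add_comm, ← add_smul, hab, one_smul]
    rw [e] at this
    exact this
  have hInt0 : interior {x : X3 | x + q3 ∈ K} = {x | x + q3 ∈ interior K} := by
    rw [hpre, ← Homeomorph.preimage_interior]; rfl
  have h0 : {x : X3 | x + q3 ∈ K} ∈ 𝓝 0 := by
    rw [← mem_interior_iff_mem_nhds, hInt0]; simpa using h.hq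
  have hcl : IsClosed {x : X3 | x + q3 ∈ K} := by
    rw [hpre]; exact h.comp.isClosed.preimage (Homeomorph.continuous _)
  rw [gauge_eq_one_iff_mem_frontier hc h0, hcl.frontier_eq, hInt0]
  have e : ((y - (1,0), z) : X3) + q3 = (y, z) := by ext <;> simp [q3]
  exact ⟨by simp only [mem_ofPred_eq, e]; exact hz, by simp only [mem_ofPred_eq, e]; exact hn⟩

lemma top_not_int (h : Bod K) {y : ℝ × ℝ} : (y, tf K y) ∉ interior K := by
  intro hn
  have hc : Continuous fun t : ℝ => ((y, t) : X3) := by fun_prop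
  have : ∀ᶠ t in 𝓝 (tf K y), ((y, t) : X3) ∈ interior K :=
    hc.continuousAt.eventually (isOpen_interior.mem_nhds hn)
  obtain ⟨t, ht, ht0⟩ := ((this.filter_mono nhdsWithin_le_nhds).and
    (self_mem_nhdsWithin (a := (tf K y)) (s := Ioi (tf K y)))).exists
  have ht0 : tf K y < t := ht0
  linarith [h.le_tf (interior_subset ht)]

lemma bot_not_int (h : Bod K) {y : ℝ × ℝ} : (y, -tf K (-y)) ∉ interior K := by
  intro hn
  have hc : Continuous fun t : ℝ => ((y, t) : X3) := by fun_prop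
  have : ∀ᶠ t in 𝓝 (-tf K (-y)), ((y, t) : X3) ∈ interior K :=
    hc.continuousAt.eventually (isOpen_interior.mem_nhds hn)
  obtain ⟨t, ht, ht0⟩ := ((this.filter_mono nhdsWithin_le_nhds).and
    (self_mem_nhdsWithin (a := (-tf K (-y))) (s := Iio (-tf K (-y))))).exists
  have ht0 : t < -tf K (-y) := ht0
  linarith [h.tf_le (interior_subset ht)]

lemma conc_bigO {P : Set (ℝ × ℝ)} {g : ℝ × ℝ → ℝ} (hg : ConcaveOn ℝ P g) {q : ℝ × ℝ}
    (hq : q ∈ interior P) : (fun y => g y - g q) =O[𝓝 q] fun y => y - q := by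
  have h1 : ConcaveOn ℝ (interior P) g := hg.subset interior_subset hg.1.interior
  have h2 := h1.locallyLipschitzOn isOpen_interior
  obtain ⟨k, t, ht, hk⟩ := h2 hq
  have ht' : t ∈ 𝓝 q := by
    rwa [isOpen_interior.nhdsWithin_eq hq] at ht
  refine Asymptotics.IsBigO.of_bound k ?_
  filter_upwards [ht'] with y hy
  exact hk.norm_sub_le hy (mem_of_mem_nhds ht')

lemma diff1 (h : Bod K) : DifferentiableAt ℝ (tf K) (1, 0) := by
  have hqi := h.int_fst h.hq
  refine diff_of_implicit (G := gauge {x : X3 | x + ((1,0),0) ∈ K}) (ε := 1)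
    (fun t x ht => by rw [gauge_smul_of_nonneg ht, smul_eq_mul]) one_ne_zero h.g1 ?_ (h.tf_pos h.hq)
    (conc_bigO h.conc hqi)
  filter_upwards [isOpen_interior.mem_nhds hqi] with y hy
  rw [one_mul]
  exact h.gauge_one (interior_subset hy) (h.tf_mem (interior_subset hy)) h.top_not_int

lemma diff2 (h : Bod K) : DifferentiableAt ℝ (fun y => tf K (-y)) (1, 0) := by
  have hqi := h.int_fst h.hq
  have hc : ConcaveOn ℝ (pr K) (fun y => tf K (-y)) := by
    refine ⟨h.conc.1, ?_⟩
    intro x hx y hy a b ha hb hab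
    have := h.conc.2 (h.pr_symm x hx) (h.pr_symm y hy) ha hb hab
    have e : -(a • x + b • y) = a • (-x) + b • (-y) := by simp; abel
    simp only [e]; exact this
  refine diff_of_implicit (G := gauge {x : X3 | x + ((1,0),0) ∈ K}) (ε := -1)
    (fun t x ht => by rw [gauge_smul_of_nonneg ht, smul_eq_mul]) (by norm_num) h.g2 ?_ ?_
    (conc_bigO hc hqi)
  · filter_upwards [isOpen_interior.mem_nhds hqi] with y hy
    rw [neg_one_mul]
    exact h.gauge_one (interior_subset hy) (h.bot_mem (interior_subset hy)) h.bot_not_int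
  · apply h.tf_pos
    have hP : -K = K := by
      ext z; constructor
      · intro hz; simpa using h.symm _ hz
      · intro hz; exact h.symm _ hz
    have h1 : interior (-K) = - interior K := by
      have := (Homeomorph.neg X3).preimage_interior K
      exact this.symm
    rw [hP] at h1
    rw [h1]; simpa using h.hq

lemma axis_int (h : Bod K) {a : ℝ} (ha : 0 ≤ a) (h1 : (a, (0:ℝ)) ∈ pr K)
    (h2 : (a, (0:ℝ)) ∉ interior (pr K)) : tf K (a, 0) + tf K (-(a,0)) ≤ 0 := by
  have hmax : ∀ a' z', ((a',(0:ℝ)),z') ∈ K → a' ≤ a := by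
    intro a' z' h3
    by_contra! hn
    apply h2
    have ha' : 0 < a' := by linarith
    have := h.ray_int (mem_pr h3) (t := a / a') (by positivity) (by rw [div_lt_one ha']; exact hn)
    have e : (a / a') • ((a', (0:ℝ)) : ℝ × ℝ) = (a, 0) := by ext <;> simp; field_simp
    rwa [e] at this
  have := h.ne a _ _ (h.tf_mem h1) (h.bot_mem h1) hmax
  linarith

theorem toFC (h : Bod K) : ∃ ω : ℝ × ℝ →L[ℝ] ℝ, FC (pr K) (fun y => tf K y - ω y) ∧
    ∀ y ∈ interior (pr K), tf K y - tf K (-y) = 2 * ω y := by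
  obtain ⟨φ1, hφ1⟩ := h.diff1
  obtain ⟨φ2, hφ2⟩ := h.diff2
  set ω : ℝ × ℝ →L[ℝ] ℝ := (1/2:ℝ) • (φ1 - φ2) with hω
  have hS : ∀ y, (tf K y - ω y) + (tf K (-y) - ω (-y)) = tf K y + tf K (-y) := by
    intro y; rw [map_neg]; ring
  have hFC : FC (pr K) (fun y => tf K y - ω y) := by
    refine ⟨h.comp.image continuous_fst, h.pr_symm, h.int_fst h.hq, ?_, ?_, ?_, ?_, ?_, ?_⟩
    · refine ⟨h.conc.1, ?_⟩
      intro x hx y hy a b ha hb hab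
      have := h.conc.2 hx hy ha hb hab
      simp only [smul_eq_mul, map_add, map_smul] at *
      linarith
    · intro l
      simp only [hS]
      set S : Set (X3 × X3) := (K ×ˢ K) ∩ {w | w.2.1 = -w.1.1 ∧ l ≤ w.1.2 + w.2.2} with hSd
      have hcl1 : IsClosed {w : X3 × X3 | w.2.1 = -w.1.1} := isClosed_eq (by fun_prop) (by fun_prop)
      have hcl2 : IsClosed {w : X3 × X3 | l ≤ w.1.2 + w.2.2} := isClosed_le (by fun_prop) (by fun_prop)
      have hcl : IsClosed {w : X3 × X3 | w.2.1 = -w.1.1 ∧ l ≤ w.1.2 + w.2.2} := hcl1.inter hcl2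
      have hSc : IsCompact S := (h.comp.prod h.comp).inter_right hcl
      have e : {y | y ∈ pr K ∧ l ≤ tf K y + tf K (-y)} = (fun w : X3 × X3 => w.1.1) '' S := by
        ext y; constructor
        · rintro ⟨h1, h2⟩
          exact ⟨((y, tf K y), (-y, tf K (-y))), ⟨⟨h.tf_mem h1, h.tf_mem (h.pr_symm _ h1)⟩, rfl, h2⟩, rfl⟩
        · rintro ⟨w, ⟨⟨h1, h2⟩, h3, h4⟩, rfl⟩
          refine ⟨⟨_, h1, rfl⟩, h4.trans (add_le_add (h.le_tf h1) ?_)⟩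
          exact h.le_tf (by rw [← h3]; exact h2)
      rw [e]
      exact (hSc.image (by fun_prop)).isClosed
    · intro y hy
      rw [hS]
      have hcont : Continuous fun t : ℝ => t • y := by fun_prop
      have : ∀ᶠ t in 𝓝 (1:ℝ), t • y ∈ interior (pr K) := by
        apply hcont.continuousAt.eventually
        simp only [one_smul]
        exact isOpen_interior.mem_nhds hy
      obtain ⟨t, ht, ht1⟩ := ((this.filter_mono nhdsWithin_le_nhds).and
        (self_mem_nhdsWithin (a := (1:ℝ)) (s := Ioi 1))).exists
      have ht1 : 1 < t := ht1
      have ht0 : 0 < t := by linarith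
      have hp := h.tf_pos (y := 0) h.zint
      have hz : (0 : ℝ × ℝ) ∈ pr K := ⟨0, interior_subset h.zint, rfl⟩
      have hty := interior_subset ht
      have h6 : 0 < 1 - 1 / t := by rw [sub_pos, div_lt_one ht0]; exact ht1
      have c1 := (concave_seg h.conc hty hz (x := 1/t) (y := 1 - 1/t) (w := y) (by positivity) h6.le
        (by ring) (by rw [smul_smul, one_div_mul_cancel ht0.ne']; simp)).2
      have c2 := (concave_seg h.conc (h.pr_symm _ hty) hz (x := 1/t) (y := 1 - 1/t) (w := -y) (by positivity) h6.le
        (by ring) (by rw [← smul_neg, smul_smul, one_div_mul_cancel ht0.ne']; simp)).2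
      have c3 := mul_nonneg (by positivity : 0 ≤ 1/t) (h.sum_nonneg hty)
      have c4 := mul_pos h6 hp
      nlinarith
    · intro s
      obtain ⟨β, κ, hβ⟩ := h.refl s
      refine ⟨β, κ - ω (2 + s * β, β), ?_⟩
      intro b hb
      have h1 := hβ b _ (h.tf_mem hb)
      have hT := mem_pr h1
      refine ⟨hT, ?_⟩
      have h2 := h.tf_le h1
      have h3 := hβ (β - b) _ (h.bot_mem hT)
      have e : β - (β - b) = b := by ring
      rw [e] at h3
      have h4 := h.le_tf h3
      have e2 : ω (2 + s * β, β) = ω (1 + s * b, b) + ω (1 + s * (β - b), β - b) := by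
        rw [← map_add]; congr 1; ext
        · simp; ring
        · simp
      rw [e2, map_neg]
      linarith
    · intro a h1 h2
      rw [hS]
      rcases le_total 0 a with ha | ha
      · exact h.axis_int ha h1 h2
      · have e : -((a, (0:ℝ)) : ℝ × ℝ) = (-a, 0) := by simp
        have h3 := h.axis_int (a := -a) (by linarith) (by rw [← e]; exact h.pr_symm _ h1) (by
          intro h3
          apply h2
          have hP : -(pr K) = pr K := by
            ext z; constructor
            · intro hz; simpa using h.pr_symm _ hz
            · intro hz; exact h.pr_symm _ hz
          have h4 : interior (-(pr K)) = - interior (pr K) := by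
            have := (Homeomorph.neg (ℝ × ℝ)).preimage_interior (pr K)
            exact this.symm
          rw [hP] at h4
          rw [h4]; simpa using h3)
        rw [← e, neg_neg] at h3
        linarith
    · have d1 := (hφ1.sub ω.hasFDerivAt).sub (hφ2.add ω.hasFDerivAt)
      have e : (φ1 - ω) - (φ2 + ω) = 0 := by
        rw [hω]; ext x <;> simp <;> ring
      rw [e] at d1
      refine d1.congr_of_eventuallyEq (Eventually.of_forall fun y => ?_)
      simp
  refine ⟨ω, hFC, fun y hy => ?_⟩
  have := hFC.main hy
  rw [map_neg] at this
  linarith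

theorem main (h : Bod K) : ∃ ω : ℝ × ℝ →L[ℝ] ℝ, ∀ y z, (y, z) ∈ K → (y, ω y - z) ∈ K := by
  obtain ⟨ω, -, hω⟩ := h.toFC
  refine ⟨(2:ℝ) • ω, fun y z hz => ?_⟩
  have key : ∀ y z, (y, z) ∈ K → y ∈ interior (pr K) → (y, 2 * ω y - z) ∈ K := by
    intro y z hz hy
    have h1 := hω y hy
    have h2 := h.le_tf hz
    have h3 := h.tf_le hz
    exact h.mem_of (interior_subset hy) (by linarith) (by linarith)
  have hc : Tendsto (fun t : ℝ => t • ((y, 2 * ω y - z) : X3)) (𝓝[<] 1) (𝓝 (y, 2 * ω y - z)) := by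
    have : Continuous fun t : ℝ => t • ((y, 2 * ω y - z) : X3) := by fun_prop
    have := this.tendsto 1
    rw [one_smul] at this
    exact this.mono_left nhdsWithin_le_nhds
  have := h.comp.isClosed.mem_of_tendsto hc (by
    filter_upwards [Ioo_mem_nhdsLT (zero_lt_one (α := ℝ))] with t ht
    have h1 := key (t • y) (t * z) (by
      have := h.cvx hz (interior_subset h.zint) ht.1.le (by linarith [ht.2] : 0 ≤ 1 - t) (by ring)
      simpa using this) (h.ray_int (mem_pr hz) ht.1.le ht.2)
    have e : t • ((y, 2 * ω y - z) : X3) = (t • y, 2 * ω (t • y) - t * z) := by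
      ext <;> simp; ring
    rw [e]; exact h1)
  simpa using this

end Bod
end FCT

namespace FCT
open Filter Topology

abbrev E3 := EuclideanSpace ℝ (Fin 3)

def SecSym (K : Set E3) (p : E3) : Prop := ∀ v w : E3, LinearIndependent ℝ ![v, w] →
  ∃ α β : ℝ, ∀ s t : ℝ, p + s • v + t • w ∈ K → p + (α - s) • v + (β - t) • w ∈ K

def NEdge (K : Set E3) (p u : E3) : Prop := ∀ a z1 z2 : ℝ, a • p + z1 • u ∈ K → a • p + z2 • u ∈ K →
    (∀ a' z' : ℝ, a' • p + z' • u ∈ K → a' ≤ a) → z1 = z2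

lemma gauge_pre (L : X3 ≃L[ℝ] E3) (s : Set E3) (x : X3) : gauge (L ⁻¹' s) x = gauge s (L x) := by
  rw [gauge_def', gauge_def']
  simp

lemma mkBod {K : Set E3} {p u : E3} (hK : IsCompact K) (hc : Convex ℝ K) (hs : ∀ x ∈ K, -x ∈ K)
    (hp : p ∈ interior K) (hsec : SecSym K p) (hne : NEdge K p u)
    (h1 : DifferentiableAt ℝ (gauge {x | x + p ∈ K}) u)
    (h2 : DifferentiableAt ℝ (gauge {x | x + p ∈ K}) (-u))
    (L : X3 ≃L[ℝ] E3) (hLp : L ((1,0),0) = p) (hLu : L (0,1) = u) : Bod (L ⁻¹' K) := by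
  have hpre : {x : X3 | x + ((1,0),0) ∈ L ⁻¹' K} = L ⁻¹' {x | x + p ∈ K} := by
    ext x; simp [hLp]
  have hg : gauge {x : X3 | x + ((1,0),0) ∈ L ⁻¹' K} = gauge {x | x + p ∈ K} ∘ L := by
    ext x; rw [hpre, gauge_pre]; rfl
  have hLf : ∀ a z : ℝ, L ((a,0),z) = a • p + z • u := by
    intro a z
    rw [← hLp, ← hLu, ← map_smul, ← map_smul, ← map_add]
    congr 1; ext <;> simp
  refine ⟨?_, ?_, ?_, ?_, ?_, ?_, ?_, ?_⟩
  · exact L.toHomeomorph.isCompact_preimage.2 hK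
  · exact hc.linear_preimage L.toLinearEquiv.toLinearMap
  · intro x hx
    simp only [mem_preimage, map_neg] at *
    exact hs _ hx
  · have := L.toHomeomorph.preimage_interior K
    have h3 : L ⁻¹' (interior K) = interior (L ⁻¹' K) := this
    rw [← h3]; simp only [mem_preimage]; rw [hLp]; exact hp
  · intro s
    have hli : LinearIndependent ℝ ![L ((s,1),0), L (0,1)] := by
      rw [LinearIndependent.pair_iff]
      intro a b hab
      rw [← map_smul, ← map_smul, ← map_add] at hab
      have := (map_eq_zero_iff L L.injective).1 hab
      simp [Prod.ext_iff] at this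
      exact ⟨this.1.2, this.2⟩
    obtain ⟨α, β, h⟩ := hsec _ _ hli
    have e : ∀ b z : ℝ, L ((1 + s * b, b), z) = p + b • L ((s,1),0) + z • L (0,1) := by
      intro b z
      rw [← hLp, ← map_smul, ← map_smul, ← map_add, ← map_add]
      congr 1; ext
      · simp; ring
      · simp
      · simp
    refine ⟨α, β, fun b z hb => ?_⟩
    simp only [mem_preimage, e] at *
    exact h _ _ hb
  · intro a z1 z2 ha hb hm
    simp only [mem_preimage, hLf] at *
    exact hne a z1 z2 ha hb hm
  · rw [hg]
    exact DifferentiableAt.comp _ (by rw [hLu]; exact h1) L.differentiableAt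
  · rw [hg]
    have e : L (0, -1) = -u := by rw [← hLu, ← map_neg]; simp
    exact DifferentiableAt.comp _ (by rw [e]; exact h2) L.differentiableAt

lemma exists_L {p u : E3} (hp : p ≠ 0) (hu : ∀ t : ℝ, u ≠ t • p) :
    ∃ L : X3 ≃L[ℝ] E3, L ((1,0),0) = p ∧ L (0,1) = u := by
  obtain ⟨e, he⟩ : ∃ e : E3, e ∉ Submodule.span ℝ ({p, u} : Set E3) := by
    by_contra! hn
    have h1 : Submodule.span ℝ ({p, u} : Set E3) = ⊤ := by ext x; simp [hn x]
    have h2 := finrank_span_le_card (R := ℝ) ({p, u} : Set E3)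
    rw [h1, finrank_top] at h2
    have h3 : ({p, u} : Set E3).toFinset.card ≤ 2 := by
      have : ({p, u} : Set E3).toFinset = {p, u} := by ext; simp
      rw [this]; exact Finset.card_le_two
    have h4 : Module.finrank ℝ E3 = 3 := by simp
    omega
  let f : X3 →ₗ[ℝ] E3 :=
    { toFun := fun x => x.1.1 • p + x.1.2 • e + x.2 • u
      map_add' := by intro x y; simp only [Prod.fst_add, Prod.snd_add, add_smul]; abel
      map_smul' := by intro c x; simp [mul_smul] }
  have hf : ∀ x, f x = x.1.1 • p + x.1.2 • e + x.2 • u := fun x => rfl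
  have hinj : Function.Injective f := by
    rw [injective_iff_map_eq_zero]
    rintro ⟨⟨a, b⟩, z⟩ h
    rw [hf] at h
    simp only at h
    have hb : b = 0 := by
      by_contra hb
      apply he
      rw [Submodule.mem_span_pair]
      refine ⟨-(a / b), -(z / b), ?_⟩
      have : e = b⁻¹ • (b • e) := by rw [smul_smul, inv_mul_cancel₀ hb, one_smul]
      have h3 : b • e = -(a • p) - z • u := by
        rw [← sub_eq_zero, ← h]; abel
      rw [this, h3, smul_sub, smul_neg, smul_smul, smul_smul, neg_smul, neg_smul]
      rw [div_eq_inv_mul, div_eq_inv_mul]; abel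
    subst hb
    have hz : z = 0 := by
      by_contra hz
      apply hu (-(a / z))
      have : u = z⁻¹ • (z • u) := by rw [smul_smul, inv_mul_cancel₀ hz, one_smul]
      have h3 : z • u = -(a • p) := by
        rw [← sub_eq_zero, ← h]; simp; abel
      rw [this, h3, smul_neg, smul_smul, neg_smul, div_eq_inv_mul]
    subst hz
    have ha : a = 0 := by
      simpa [hp] using h
    subst ha; rfl
  have hfr : Module.finrank ℝ X3 = Module.finrank ℝ E3 := by simp [X3]
  refine ⟨(LinearEquiv.ofInjectiveOfFinrankEq f hinj hfr).toContinuousLinearEquiv, ?_, ?_⟩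
  · show f _ = _
    simp [hf]
  · show f _ = _
    simp [hf]

lemma exists_skew {K : Set E3} {p u : E3} (hK : IsCompact K) (hc : Convex ℝ K) (hs : ∀ x ∈ K, -x ∈ K)
    (hp : p ∈ interior K) (hp0 : p ≠ 0) (hsec : SecSym K p) (hne : NEdge K p u)
    (h1 : DifferentiableAt ℝ (gauge {x | x + p ∈ K}) u)
    (h2 : DifferentiableAt ℝ (gauge {x | x + p ∈ K}) (-u))
    (hu : ∀ t : ℝ, u ≠ t • p) : ∃ w : E3 →L[ℝ] ℝ, w u = 2 ∧ ∀ x ∈ K, x - w x • u ∈ K := by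
  obtain ⟨L, hLp, hLu⟩ := exists_L hp0 hu
  obtain ⟨ω, hω⟩ := (mkBod hK hc hs hp hsec hne h1 h2 L hLp hLu).main
  refine ⟨((2:ℝ) • ContinuousLinearMap.snd ℝ (ℝ × ℝ) ℝ - ω.comp (ContinuousLinearMap.fst ℝ (ℝ × ℝ) ℝ)).comp
    (L.symm : E3 →L[ℝ] X3), ?_, ?_⟩
  · rw [← hLu]; simp
  · intro x hx
    obtain ⟨⟨y, z⟩, rfl⟩ := L.surjective x
    have := hω y z hx
    simp only [mem_preimage] at this
    convert this using 1
    rw [← hLu, ← map_smul, ← map_sub]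
    congr 1
    ext <;> simp
    ring

end FCT

namespace FCT
open Filter Topology

def EdgeAt (K : Set E3) (p : E3) (δ : ℝ) (u : E3) (a t : ℝ) : Prop :=
  a • p + t • u ∈ K ∧ a • p + (t + δ) • u ∈ K ∧ ∀ a' t' : ℝ, a' • p + t' • u ∈ interior K → a' ≤ a

lemma EdgeAt.max {K : Set E3} (hc : Convex ℝ K) (h0 : (0 : E3) ∈ interior K) {p u : E3} {δ a t : ℝ}
    (h : EdgeAt K p δ u a t) {a' t' : ℝ} (h' : a' • p + t' • u ∈ K) : a' ≤ a := by
  have h1 : ∀ s : ℝ, s ∈ Ioo (0:ℝ) 1 → s * a' ≤ a := by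
    intro s hs
    have := hc.combo_interior_self_mem_interior h0 h' (by linarith [hs.2] : 0 < 1 - s) hs.1.le (by ring)
    rw [smul_zero, zero_add, smul_add, smul_smul, smul_smul] at this
    exact h.2.2 _ _ this
  have h2 : Tendsto (fun s : ℝ => s * a') (𝓝[<] 1) (𝓝 a') := by
    have : Tendsto (fun s : ℝ => s * a') (𝓝 1) (𝓝 (1 * a')) := (continuous_id.mul continuous_const).tendsto 1
    rw [one_mul] at this
    exact this.mono_left nhdsWithin_le_nhds
  refine le_of_tendsto h2 ?_
  filter_upwards [Ioo_mem_nhdsLT (zero_lt_one (α := ℝ))] with s hs using h1 s hs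

def ESet (K : Set E3) (p : E3) (n : ℕ) : Set E3 :=
  {u | ∃ a ∈ Icc (-(n:ℝ)) n, ∃ t ∈ Icc (-(n:ℝ)) n, EdgeAt K p (1 / ((n:ℝ) + 1)) u a t}

lemma isClosed_ESet {K : Set E3} (hK : IsClosed K) (p : E3) (n : ℕ) : IsClosed (ESet K p n) := by
  set δ : ℝ := 1 / ((n:ℝ) + 1)
  set I := Icc (-(n:ℝ)) n
  let C : Set (E3 × (I × I)) := {w | EdgeAt K p δ w.1 w.2.1 w.2.2}
  have hC : IsClosed C := by
    have c1 : IsClosed {w : E3 × (I × I) | ((w.2.1 : ℝ)) • p + (w.2.2 : ℝ) • w.1 ∈ K} :=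
      hK.preimage (f := fun w : E3 × (I × I) => ((w.2.1 : ℝ)) • p + (w.2.2 : ℝ) • w.1) (by fun_prop)
    have c2 : IsClosed {w : E3 × (I × I) | ((w.2.1 : ℝ)) • p + ((w.2.2 : ℝ) + δ) • w.1 ∈ K} :=
      hK.preimage (f := fun w : E3 × (I × I) => ((w.2.1 : ℝ)) • p + ((w.2.2 : ℝ) + δ) • w.1) (by fun_prop)
    have c3 : IsClosed {w : E3 × (I × I) | ∀ a' t' : ℝ, a' • p + t' • w.1 ∈ interior K → a' ≤ (w.2.1 : ℝ)} := by
      simp only [setOf_forall]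
      refine isClosed_iInter fun a' => isClosed_iInter fun t' => ?_
      rw [← isOpen_compl_iff]
      have o1 : IsOpen {w : E3 × (I × I) | a' • p + t' • w.1 ∈ interior K} :=
        isOpen_interior.preimage (f := fun w : E3 × (I × I) => a' • p + t' • w.1) (by fun_prop)
      have o2 : IsOpen {w : E3 × (I × I) | (w.2.1 : ℝ) < a'} := isOpen_lt (by fun_prop) (by fun_prop)
      convert o1.inter o2 using 1
      ext w; simp
    exact c1.inter (c2.inter c3)
  have := isClosedMap_fst_of_compactSpace (X := E3) (Y := I × I) C hC
  convert this using 1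
  ext u; constructor
  · rintro ⟨a, ha, t, ht, h⟩
    exact ⟨(u, (⟨a, ha⟩, ⟨t, ht⟩)), h, rfl⟩
  · rintro ⟨⟨u', a, t⟩, h, rfl⟩
    exact ⟨a, a.2, t, t.2, h⟩

lemma ESet_null {K : Set E3} (hK : IsClosed K) (hc : Convex ℝ K) (h0 : (0 : E3) ∈ interior K)
    (p : E3) (n : ℕ) : ∀ᵐ u : E3, u ∉ ESet K p n := by
  set δ : ℝ := 1 / ((n:ℝ) + 1) with hδ
  have hδ0 : 0 < δ := by positivity
  refine ae_mem_of_ae_add_linearMap_mem (LinearMap.toSpanSingleton ℝ E3 p) (volume : Measure ℝ) volume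
    (s := (ESet K p n)ᶜ) (isClosed_ESet hK p n).measurableSet.compl ?_
  intro y
  have hcount : {ε : ℝ | y + ε • p ∈ ESet K p n}.Countable := by
    have hex : ∀ ε : ℝ, ∃ w : ℝ × ℝ, y + ε • p ∈ ESet K p n → EdgeAt K p δ (y + ε • p) w.1 w.2 := by
      intro ε
      by_cases h : y + ε • p ∈ ESet K p n
      · obtain ⟨a, _, t, _, h⟩ := h
        exact ⟨(a, t), fun _ => h⟩
      · exact ⟨0, fun h' => absurd h' h⟩
    choose w hw using hex
    have key : ∀ ε ε' : ℝ, y + ε • p ∈ ESet K p n → y + ε' • p ∈ ESet K p n → ε < ε' →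
        (w ε').2 + δ ≤ (w ε).2 := by
      intro ε ε' h h' hlt
      have e1 := hw ε h
      have e2 := hw ε' h'
      have m1 := e1.max hc h0 (a' := (w ε').1 + ((w ε').2 + δ) * (ε' - ε)) (t' := (w ε').2 + δ) (by
        convert e2.2.1 using 1
        module)
      have m2 := e2.max hc h0 (a' := (w ε).1 - (w ε).2 * (ε' - ε)) (t' := (w ε).2) (by
        convert e1.1 using 1
        module)
      by_contra! hn
      have := mul_lt_mul_of_pos_right hn (sub_pos.2 hlt)
      linarith
    refine Set.PairwiseDisjoint.countable_of_isOpen (s := fun ε => Ioo (w ε).2 ((w ε).2 + δ)) ?_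
      (fun _ _ => isOpen_Ioo) (fun ε _ => nonempty_Ioo.2 (by linarith))
    intro ε h ε' h' hne
    rw [Function.onFun, Set.disjoint_left]
    intro x hx hx'
    rcases lt_or_gt_of_ne hne with hl | hl
    · have := key _ _ h h' hl; linarith [hx.1, hx'.2]
    · have := key _ _ h' h hl; linarith [hx.2, hx'.1]
  have := hcount.ae_notMem volume
  filter_upwards [this] with ε hε
  simpa using hε

lemma ae_NEdge {K : Set E3} (hK : IsClosed K) (hc : Convex ℝ K) (h0 : (0 : E3) ∈ interior K)
    (p : E3) : ∀ᵐ u : E3, NEdge K p u := by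
  have := ae_all_iff.2 fun n => ESet_null hK hc h0 p n
  filter_upwards [this] with u hu
  have main : ∀ a z1 z2 : ℝ, a • p + z1 • u ∈ K → a • p + z2 • u ∈ K →
    (∀ a' z' : ℝ, a' • p + z' • u ∈ K → a' ≤ a) → ¬ z1 < z2 := by
    intro a z1 z2 h1 h2 hm hlt
    obtain ⟨n1, hn1⟩ := exists_nat_one_div_lt (sub_pos.2 hlt)
    obtain ⟨n2, hn2⟩ := exists_nat_ge (max |a| |z1|)
    set n := max n1 n2
    have hn1' : (n1:ℝ) ≤ n := by exact_mod_cast le_max_left _ _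
    have hn2' : (n2:ℝ) ≤ n := by exact_mod_cast le_max_right _ _
    have ha : |a| ≤ n := (le_max_left _ _).trans (hn2.trans hn2')
    have hz : |z1| ≤ n := (le_max_right _ _).trans (hn2.trans hn2')
    set δ : ℝ := 1 / ((n:ℝ) + 1) with hδ
    have hδ0 : 0 < δ := by positivity
    have hδ1 : δ < z2 - z1 := lt_of_le_of_lt (one_div_le_one_div_of_le (by positivity) (by linarith)) hn1
    refine hu n ⟨a, abs_le.1 ha, z1, abs_le.1 hz, h1, ?_, fun a' t' h => hm a' t' (interior_subset h)⟩
    have hd : 0 < z2 - z1 := by linarith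
    have := hc h1 h2 (a := 1 - δ / (z2 - z1)) (b := δ / (z2 - z1))
      (by rw [sub_nonneg, div_le_one hd]; exact hδ1.le) (by positivity) (by ring)
    convert this using 1
    have e : δ / (z2 - z1) * (z2 - z1) = δ := by field_simp
    have e2 : z1 + δ = (1 - δ / (z2 - z1)) * z1 + δ / (z2 - z1) * z2 := by linear_combination -e
    rw [e2]
    module
  intro a z1 z2 h1 h2 hm
  rcases lt_trichotomy z1 z2 with h | h | h
  · exact absurd h (main a z1 z2 h1 h2 hm)
  · exact h
  · exact absurd h (main a z2 z1 h2 h1 hm)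

theorem dense_skew {K : Set E3} {p : E3} (hK : IsCompact K) (hc : Convex ℝ K) (hs : ∀ x ∈ K, -x ∈ K)
    (hp : p ∈ interior K) (hp0 : p ≠ 0) (h0 : (0 : E3) ∈ interior K) (hsec : SecSym K p) :
    Dense {u : E3 | ∃ w : E3 →L[ℝ] ℝ, w u = 2 ∧ ∀ x ∈ K, x - w x • u ∈ K} := by
  have hpre : {x : E3 | x + p ∈ K} = (Homeomorph.addRight p) ⁻¹' K := rfl
  have hcv : Convex ℝ {x : E3 | x + p ∈ K} := by
    intro x hx y hy a b ha hb hab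
    have := hc hx hy ha hb hab
    have e : a • (x + p) + b • (y + p) = a • x + b • y + p := by
      rw [smul_add, smul_add, add_add_add_comm, ← add_smul, hab, one_smul]
    rw [e] at this
    exact this
  have hInt0 : interior {x : E3 | x + p ∈ K} = {x | x + p ∈ interior K} := by
    rw [hpre, ← Homeomorph.preimage_interior]; rfl
  have hn : {x : E3 | x + p ∈ K} ∈ 𝓝 0 := by
    rw [← mem_interior_iff_mem_nhds, hInt0]; simpa using hp
  obtain ⟨C, hL⟩ := hcv.lipschitz_gauge hn
  have a1 : ∀ᵐ u : E3, DifferentiableAt ℝ (gauge {x | x + p ∈ K}) u := hL.ae_differentiableAt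
  have a2 : ∀ᵐ u : E3, DifferentiableAt ℝ (gauge {x | x + p ∈ K}) (-u) :=
    (Measure.measurePreserving_neg (volume : Measure E3)).quasiMeasurePreserving.ae a1
  have a3 : ∀ᵐ u : E3, u ∉ Submodule.span ℝ ({p} : Set E3) := by
    have : volume (Submodule.span ℝ ({p} : Set E3) : Set E3) = 0 := by
      apply Measure.addHaar_submodule
      intro ht
      have h2 := finrank_span_singleton (K := ℝ) hp0
      rw [ht, finrank_top] at h2
      simp at h2
    exact measure_eq_zero_iff_ae_notMem.1 this
  refine Measure.dense_of_ae (μ := volume) ?_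
  filter_upwards [a1, a2, a3, ae_NEdge hK.isClosed hc h0 p] with u u1 u2 u3 u4
  refine exists_skew hK hc hs hp hp0 hsec u4 u1 u2 ?_
  intro t ht
  exact u3 (Submodule.mem_span_singleton.2 ⟨t, ht.symm⟩)

end FCT

namespace FCT
open Filter Topology
open scoped RealInnerProductSpace

lemma exists_std (B : LinearMap.BilinForm ℝ E3) (hsym : ∀ x y, B x y = B y x)
    (hpos : ∀ x, x ≠ 0 → 0 < B x x) : ∃ T : E3 ≃ₗ[ℝ] E3, ∀ x, B (T x) (T x) = ‖x‖ ^ 2 := by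
  have hs : LinearMap.IsSymm B := ⟨fun x y => by simpa using hsym x y⟩
  obtain ⟨v0, hv0⟩ := LinearMap.BilinForm.exists_orthogonal_basis hs
  have h3 : Module.finrank ℝ E3 = 3 := by simp
  let v := v0.reindex (finCongr h3)
  have hv : ∀ i j, i ≠ j → B (v i) (v j) = 0 := by
    intro i j hij
    simp only [v, Module.Basis.reindex_apply]
    apply hv0
    simpa using hij
  have hd : ∀ i, 0 < B (v i) (v i) := fun i => hpos _ (v.ne_zero i)
  have hun : ∀ i, IsUnit (1 / Real.sqrt (B (v i) (v i))) := by
    intro i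
    have := Real.sqrt_pos.2 (hd i)
    rw [isUnit_iff_ne_zero]; positivity
  let b := v.isUnitSMul hun
  have hb : ∀ i j, B (b i) (b j) = if i = j then 1 else 0 := by
    intro i j
    simp only [b, Module.Basis.isUnitSMul_apply, map_smul, LinearMap.smul_apply, smul_eq_mul]
    split_ifs with h
    · subst h
      have h1 := Real.sqrt_pos.2 (hd i)
      have h2 := Real.mul_self_sqrt (hd i).le
      field_simp
      nlinarith
    · rw [hv i j h]; simp
  refine ⟨(EuclideanSpace.basisFun (Fin 3) ℝ).toBasis.equiv b (Equiv.refl _), ?_⟩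
  intro x
  have e : ((EuclideanSpace.basisFun (Fin 3) ℝ).toBasis.equiv b (Equiv.refl _)) x = ∑ i, x i • b i := by
    conv_lhs => rw [← (EuclideanSpace.basisFun (Fin 3) ℝ).sum_repr x]
    rw [map_sum]
    congr 1; ext1 i
    rw [map_smul]
    have := (EuclideanSpace.basisFun (Fin 3) ℝ).toBasis.equiv_apply i b (Equiv.refl _)
    rw [OrthonormalBasis.coe_toBasis] at this
    rw [this]
    simp
  rw [e, EuclideanSpace.norm_sq_eq]
  simp only [map_sum, map_smul, LinearMap.sum_apply, LinearMap.smul_apply, smul_eq_mul, hb]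
  simp [Fin.sum_univ_three]
  ring

def polar3 (K : Set E3) : Set E3 := {ξ | ∀ x ∈ K, ⟪x, ξ⟫ ≤ 1}

lemma polar3_closed (K : Set E3) : IsClosed (polar3 K) := by
  simp only [polar3, Set.ofPred_forall]
  exact isClosed_iInter fun x => isClosed_iInter fun _ => isClosed_le (by fun_prop) (by fun_prop)

lemma polar3_compact {K : Set E3} (h0 : (0 : E3) ∈ interior K) : IsCompact (polar3 K) := by
  obtain ⟨r, hr, hb⟩ := Metric.nhds_basis_closedBall.mem_iff.1 (mem_interior_iff_mem_nhds.1 h0)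
  refine Metric.isCompact_of_isClosed_isBounded (polar3_closed K) ?_
  refine (Metric.isBounded_closedBall (x := (0:E3)) (r := 1 / r)).subset ?_
  intro ξ hξ
  rw [mem_closedBall_zero_iff]
  by_cases h : ξ = 0
  · subst h; simp; positivity
  have hn : 0 < ‖ξ‖ := norm_pos_iff.2 h
  have := hξ ((r / ‖ξ‖) • ξ) (hb (by
    rw [mem_closedBall_zero_iff, norm_smul, Real.norm_of_nonneg (by positivity)]
    field_simp; rfl))
  rw [real_inner_smul_left, real_inner_self_eq_norm_sq] at this
  rw [le_div_iff₀ hr]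
  have e : r / ‖ξ‖ * ‖ξ‖ ^ 2 = ‖ξ‖ * r := by field_simp
  linarith

lemma polar3_int {K : Set E3} (hK : IsCompact K) : (0 : E3) ∈ interior (polar3 K) := by
  obtain ⟨B, hB⟩ := hK.isBounded.exists_norm_le
  rw [mem_interior_iff_mem_nhds]
  have hB1 : 0 < |B| + 1 := by positivity
  refine mem_of_superset (Metric.ball_mem_nhds 0 (ε := 1 / (|B| + 1)) (by positivity)) ?_
  intro ξ hξ x hx
  rw [mem_ball_zero_iff, lt_div_iff₀ hB1] at hξ
  have h1 := real_inner_le_norm x ξ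
  have h2 := mul_le_mul_of_nonneg_right (hB x hx) (norm_nonneg ξ)
  have h3 := mul_le_mul_of_nonneg_right (le_abs_self B) (norm_nonneg ξ)
  nlinarith [norm_nonneg ξ]

lemma cintg {P : Set E3} (hP : IsCompact P) (x y : E3) :
    IntegrableOn (fun ξ => ⟪x, ξ⟫ * ⟪y, ξ⟫) P volume :=
  (Continuous.continuousOn (by fun_prop)).integrableOn_compact hP

def QF (P : Set E3) (hP : IsCompact P) : LinearMap.BilinForm ℝ E3 :=
  LinearMap.mk₂ ℝ (fun x y => ∫ ξ in P, ⟪x, ξ⟫ * ⟪y, ξ⟫)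
    (by
      intro x x' y
      rw [← integral_add (cintg hP x y) (cintg hP x' y)]
      simp only [inner_add_left, add_mul])
    (by
      intro c x y
      rw [smul_eq_mul, ← integral_const_mul]
      simp only [real_inner_smul_left, mul_assoc])
    (by
      intro x y y'
      rw [← integral_add (cintg hP x y) (cintg hP x y')]
      simp only [inner_add_left, mul_add])
    (by
      intro c x y
      rw [smul_eq_mul, ← integral_const_mul]
      simp only [real_inner_smul_left, mul_left_comm])

lemma QF_apply {P : Set E3} (hP : IsCompact P) (x y : E3) :
    QF P hP x y = ∫ ξ in P, ⟪x, ξ⟫ * ⟪y, ξ⟫ := rfl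

lemma QF_pos {P : Set E3} (hP : IsCompact P) (h0 : (0:E3) ∈ interior P) (x : E3) (hx : x ≠ 0) :
    0 < QF P hP x x := by
  rw [QF_apply]
  rw [setIntegral_pos_iff_support_of_nonneg_ae (Eventually.of_forall fun ξ => mul_self_nonneg _) (cintg hP x x)]
  have hop : IsOpen ((Function.support fun ξ : E3 => ⟪x, ξ⟫ * ⟪x, ξ⟫) ∩ interior P) := by
    refine IsOpen.inter ?_ isOpen_interior
    exact (isOpen_ne_fun (by fun_prop) (by fun_prop) : IsOpen {ξ : E3 | ⟪x, ξ⟫ * ⟪x, ξ⟫ ≠ 0})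
  refine lt_of_lt_of_le (hop.measure_pos volume ?_) (measure_mono (inter_subset_inter_right _ interior_subset))
  have hc : Continuous fun t : ℝ => t • x := by fun_prop
  have : ∀ᶠ t in 𝓝 (0:ℝ), t • x ∈ interior P :=
    hc.continuousAt.eventually (isOpen_interior.mem_nhds (by simpa using h0))
  obtain ⟨t, ht, ht0⟩ := ((this.filter_mono nhdsWithin_le_nhds).and
    (self_mem_nhdsWithin (a := (0:ℝ)) (s := Ioi 0))).exists
  have ht0 : 0 < t := ht0
  refine ⟨t • x, ?_, ht⟩
  have hn : 0 < ‖x‖ := norm_pos_iff.2 hx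
  rw [Function.mem_support, real_inner_smul_right, real_inner_self_eq_norm_sq]
  positivity

lemma QF_inv {P : Set E3} (hP : IsCompact P) {a u : E3} (hau : ⟪u, a⟫ = 2)
    (hPinv : ∀ ξ ∈ P, ξ - ⟪u, ξ⟫ • a ∈ P) (x y : E3) :
    QF P hP (x - ⟪a, x⟫ • u) (y - ⟪a, y⟫ • u) = QF P hP x y := by
  let f : E3 →L[ℝ] E3 := ContinuousLinearMap.id ℝ E3 - (innerSL ℝ u).smulRight a
  have hf : ∀ ξ, f ξ = ξ - ⟪u, ξ⟫ • a := fun ξ => by simp [f]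
  have hff : ∀ ξ, f (f ξ) = ξ := by
    intro ξ
    rw [hf, hf, inner_sub_right, real_inner_smul_right, hau]
    module
  have himg : f '' P = P := by
    ext ξ; constructor
    · rintro ⟨η, h, rfl⟩; rw [hf]; exact hPinv _ h
    · intro h; exact ⟨f ξ, by rw [hf]; exact hPinv _ h, hff ξ⟩
  have hdet : |f.det| = 1 := by
    have h1 : (f : E3 →ₗ[ℝ] E3) * (f : E3 →ₗ[ℝ] E3) = 1 := by
      ext1 ξ; exact hff ξ
    have h2 := congrArg LinearMap.det h1
    rw [map_mul, map_one] at h2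
    have h3 : f.det * f.det = 1 := h2
    rcases mul_self_eq_one_iff.1 h3 with h | h <;> rw [h] <;> simp
  have := integral_image_eq_integral_abs_det_fderiv_smul (μ := (volume : Measure E3)) (f := f)
    (f' := fun _ => f) hP.isClosed.measurableSet
    (fun ξ _ => f.hasFDerivAt.hasFDerivWithinAt) (Function.LeftInverse.injective hff).injOn
    (fun ξ => ⟪x, ξ⟫ * ⟪y, ξ⟫)
  rw [himg] at this
  rw [QF_apply, QF_apply, this]
  congr 1; ext1 ξ
  rw [hdet, one_smul, hf]
  simp only [inner_sub_left, inner_sub_right, real_inner_smul_left, real_inner_smul_right]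
  rw [real_inner_comm a x, real_inner_comm a y]
  ring

theorem ellipsoid_of_dense {K : Set E3} (hK : IsCompact K) (hc : Convex ℝ K) 
    (h0 : (0 : E3) ∈ interior K) 
    (hd : Dense {u : E3 | ∃ w : E3 →L[ℝ] ℝ, w u = 2 ∧ ∀ x ∈ K, x - w x • u ∈ K}) :
    ∃ T : E3 ≃ₗ[ℝ] E3, K = T '' closedBall 0 1 := by
  set P := polar3 K with hPd
  have hP : IsCompact P := polar3_compact h0
  set Q := QF P hP with hQ
  have hpos : ∀ x, x ≠ 0 → 0 < Q x x := QF_pos hP (polar3_int hK)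
  have hsym : ∀ x y, Q x y = Q y x := by
    intro x y; rw [hQ, QF_apply, QF_apply]; simp only [mul_comm]
  have hQc : ∀ x, Continuous fun y => Q x y := fun x => (Q x).continuous_of_finiteDimensional
  have hQcc : Continuous fun y => Q y y := by
    have : ∀ y, Q y y = QF P hP y y := fun y => rfl
    have h2 : (fun y : E3 => Q y y) = fun y => ∑ i, ∑ j, y i * (y j * Q (EuclideanSpace.basisFun (Fin 3) ℝ i) (EuclideanSpace.basisFun (Fin 3) ℝ j)) := by
      ext y
      conv_lhs => rw [← (EuclideanSpace.basisFun (Fin 3) ℝ).sum_repr y]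
      simp only [map_sum, map_smul, LinearMap.sum_apply, LinearMap.smul_apply, smul_eq_mul]
      simp [Fin.sum_univ_three]
      ring
    rw [h2]
    fun_prop
  -- reflections
  have hrefl : ∀ u : E3, u ≠ 0 → ∀ x ∈ K, x - (2 * Q x u / Q u u) • u ∈ K := by
    have h1 : ∀ u : E3, u ≠ 0 → (∃ w : E3 →L[ℝ] ℝ, w u = 2 ∧ ∀ x ∈ K, x - w x • u ∈ K) →
        ∀ x ∈ K, x - (2 * Q x u / Q u u) • u ∈ K := by
      rintro u hu ⟨w, hw, hwK⟩ x hx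
      set a := (InnerProductSpace.toDual ℝ E3).symm w with ha
      have haw : ∀ x, w x = ⟪a, x⟫ := by
        intro x; rw [ha, InnerProductSpace.toDual_symm_apply]
      have hau : ⟪u, a⟫ = 2 := by rw [real_inner_comm, ← haw, hw]
      have hPi : ∀ ξ ∈ P, ξ - ⟪u, ξ⟫ • a ∈ P := by
        intro ξ hξ y hy
        have := hξ _ (hwK y hy)
        rw [haw, inner_sub_left, real_inner_smul_left] at this
        rw [inner_sub_right, real_inner_smul_right, real_inner_comm a y]
        linarith
      have h2 := QF_inv hP hau hPi x u
      rw [← haw, ← haw, hw, ← hQ] at h2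
      have e : u - (2:ℝ) • u = -u := by module
      rw [e, map_neg, map_sub, map_smul, LinearMap.sub_apply, LinearMap.smul_apply, smul_eq_mul] at h2
      have h3 : w x = 2 * Q x u / Q u u := by
        rw [eq_div_iff (hpos u hu).ne']; linarith
      rw [← h3]; exact hwK x hx
    intro u hu x hx
    have hfr : ∃ᶠ v in 𝓝 u, (∃ w : E3 →L[ℝ] ℝ, w v = 2 ∧ ∀ x ∈ K, x - w x • v ∈ K) :=
      mem_closure_iff_frequently.1 (hd u)
    have hev : ∀ᶠ v in 𝓝 u, v ≠ 0 := isOpen_ne.mem_nhds hu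
    have hF : ContinuousAt (fun v => x - (2 * Q x v / Q v v) • v) u := by
      have := (hpos u hu).ne'
      have c1 : ContinuousAt (fun v => 2 * Q x v / Q v v) u :=
        ContinuousAt.div (continuous_const.mul (hQc x)).continuousAt hQcc.continuousAt this
      exact continuousAt_const.sub (c1.smul continuousAt_id)
    refine hK.isClosed.mem_of_frequently_of_tendsto ?_ hF
    exact (hfr.and_eventually hev).mono fun v hv => h1 v hv.2 hv.1 x hx
  have hrot : ∀ x y : E3, Q x x = Q y y → x ∈ K → y ∈ K := by
    intro x y hxy hx
    by_cases hne : x = y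
    · rwa [← hne]
    have hu : x - y ≠ 0 := sub_ne_zero.2 hne
    have := hrefl _ hu x hx
    have e : 2 * Q x (x - y) = Q (x - y) (x - y) := by
      simp only [map_sub, LinearMap.sub_apply]
      rw [hsym y x]; linarith
    rw [e, div_self (hpos _ hu).ne', one_smul] at this
    simpa using this
  obtain ⟨x0, hx0, hmax⟩ := hK.exists_isMaxOn ⟨0, interior_subset h0⟩ hQcc.continuousOn
  have hmax : ∀ x ∈ K, Q x x ≤ Q x0 x0 := fun x hx => hmax hx
  have hx0ne : x0 ≠ 0 := by
    rintro rfl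
    have hc : Continuous fun t : ℝ => t • (EuclideanSpace.basisFun (Fin 3) ℝ 0) := by fun_prop
    have : ∀ᶠ t in 𝓝 (0:ℝ), t • (EuclideanSpace.basisFun (Fin 3) ℝ 0) ∈ interior K :=
      hc.continuousAt.eventually (isOpen_interior.mem_nhds (by simpa using h0))
    obtain ⟨t, ht, ht0⟩ := ((this.filter_mono nhdsWithin_le_nhds).and
      (self_mem_nhdsWithin (a := (0:ℝ)) (s := Ioi 0))).exists
    have ht0 : 0 < t := ht0
    have h1 := hmax _ (interior_subset ht)
    have h2 := hpos (t • (EuclideanSpace.basisFun (Fin 3) ℝ 0))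
      (smul_ne_zero ht0.ne' ((EuclideanSpace.basisFun (Fin 3) ℝ).toBasis.ne_zero 0))
    simp only [map_zero] at h1
    linarith
  set R := Real.sqrt (Q x0 x0) with hR
  have hR0 : 0 < R := Real.sqrt_pos.2 (hpos _ hx0ne)
  have hR2 : R ^ 2 = Q x0 x0 := Real.sq_sqrt (hpos _ hx0ne).le
  have hKQ : ∀ y, y ∈ K ↔ Q y y ≤ R ^ 2 := by
    intro y
    rw [hR2]
    refine ⟨hmax y, fun hy => ?_⟩
    by_cases hy0 : y = 0
    · rw [hy0]; exact interior_subset h0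
    have hyp := hpos y hy0
    set c := Real.sqrt (Q y y) with hc'
    have hc0 : 0 < c := Real.sqrt_pos.2 hyp
    have hc2 : c ^ 2 = Q y y := Real.sq_sqrt hyp.le
    have hcR : c ≤ R := Real.sqrt_le_sqrt hy
    have hm : (R / c) • y ∈ K := by
      refine hrot x0 _ ?_ hx0
      simp only [map_smul, LinearMap.smul_apply, smul_eq_mul]
      rw [← hR2, ← hc2]; field_simp
    have := hc hm (interior_subset h0) (a := c / R) (b := 1 - c / R) (by positivity)
      (by rw [sub_nonneg, div_le_one hR0]; exact hcR) (by ring)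
    rw [smul_smul, smul_zero, add_zero] at this
    have e : c / R * (R / c) = 1 := by field_simp
    rwa [e, one_smul] at this
  obtain ⟨T, hT⟩ := exists_std Q hsym hpos
  refine ⟨T.trans (LinearEquiv.smulOfNeZero ℝ E3 R hR0.ne'), ?_⟩
  ext y
  rw [hKQ]
  constructor
  · intro hy
    refine ⟨R⁻¹ • T.symm y, ?_, ?_⟩
    · rw [mem_closedBall_zero_iff, norm_smul, Real.norm_of_nonneg (by positivity), inv_mul_le_iff₀ hR0, mul_one]
      have := hT (T.symm y)
      rw [T.apply_symm_apply] at this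
      rw [this] at hy
      exact (pow_le_pow_iff_left₀ (norm_nonneg _) hR0.le two_ne_zero).1 hy
    · simp [smul_smul, hR0.ne']
  · rintro ⟨x, hx, rfl⟩
    rw [mem_closedBall_zero_iff] at hx
    have e : (T.trans (LinearEquiv.smulOfNeZero ℝ E3 R hR0.ne')) x = R • T x := rfl
    rw [e]
    simp only [map_smul, LinearMap.smul_apply, smul_eq_mul]
    rw [hT]
    have : ‖x‖ ^ 2 ≤ 1 := by nlinarith [norm_nonneg x]
    nlinarith [sq_nonneg R]

end FCT

namespace FCT
open Filter Topology
open scoped RealInnerProductSpace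

/-- data of the two parallel supporting planes -/
structure Sup3 (K : Set E3) (φ : E3 →L[ℝ] ℝ) (l : ℝ) : Prop where
  cvx : Convex ℝ K
  l1 : 1 < l
  up : ∀ x ∈ K, φ x ≤ 1
  lo : ∀ x ∈ K, -l ≤ φ x
  inv : ∀ x ∈ K, (-l⁻¹) • x ∈ K
  sec : SecSym K 0

lemma Sup3.plane {K : Set E3} {φ : E3 →L[ℝ] ℝ} {l : ℝ} (h : Sup3 K φ l) {y w : E3} (hy : y ∈ K)
    (hφ : φ y = -l) (hli : LinearIndependent ℝ ![y, w]) :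
    ∃ c : E3, c ∈ Submodule.span ℝ ({y, w} : Set E3) ∧ φ c = 1 - l ∧
      ∀ x ∈ K, x ∈ Submodule.span ℝ ({y, w} : Set E3) → c - x ∈ K := by
  have hl := h.l1
  have hl0 : l ≠ 0 := by linarith
  obtain ⟨α, β, hs⟩ := h.sec y w hli
  have hs' : ∀ x ∈ K, x ∈ Submodule.span ℝ ({y, w} : Set E3) → (α • y + β • w) - x ∈ K := by
    intro x hx hxs
    obtain ⟨s, t, rfl⟩ := Submodule.mem_span_pair.1 hxs
    have := hs s t (by simpa using hx)
    convert this using 1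
    module
  have hys : y ∈ Submodule.span ℝ ({y, w} : Set E3) := Submodule.subset_span (by simp)
  refine ⟨α • y + β • w, Submodule.mem_span_pair.2 ⟨α, β, rfl⟩, ?_, hs'⟩
  have a1 := h.up _ (hs' y hy hys)
  have a2 := h.lo _ (hs' _ (h.inv y hy) (Submodule.smul_mem _ _ hys))
  rw [map_sub, hφ] at a1
  rw [map_sub, map_smul, hφ, smul_eq_mul] at a2
  have : -l⁻¹ * -l = 1 := by field_simp
  rw [this] at a2
  linarith

lemma Sup3.single {K : Set E3} {φ : E3 →L[ℝ] ℝ} {l : ℝ} (h : Sup3 K φ l) {y w : E3} (hy : y ∈ K)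
    (hφ : φ y = -l) (hli : LinearIndependent ℝ ![y, w])
    (hu : ∀ f ∈ K, φ f = -l → f ∈ Submodule.span ℝ ({y, w} : Set E3) → f = y) :
    (∀ x ∈ K, x ∈ Submodule.span ℝ ({y, w} : Set E3) → (1 - l⁻¹) • y - x ∈ K) ∧
    ∀ m : E3, m ∈ Submodule.span ℝ ({y, w} : Set E3) → φ m = -l → (-l⁻¹) • m ∈ K → m = y := by
  have hl := h.l1
  have hl0 : l ≠ 0 := by linarith
  obtain ⟨c, hcs, hcφ, hc⟩ := h.plane hy hφ hli
  have hys : y ∈ Submodule.span ℝ ({y, w} : Set E3) := Submodule.subset_span (by simp)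
  have e1 : -l⁻¹ * -l = 1 := by field_simp
  have key : ∀ m : E3, m ∈ Submodule.span ℝ ({y, w} : Set E3) → φ m = -l → (-l⁻¹) • m ∈ K →
      c - (-l⁻¹) • m = y := by
    intro m hm hmφ hmK
    have hms := Submodule.smul_mem _ (-l⁻¹) hm
    refine hu _ (hc _ hmK hms) ?_ (Submodule.sub_mem _ hcs hms)
    rw [map_sub, map_smul, hmφ, hcφ, smul_eq_mul, e1]; ring
  have k1 := key y hys hφ (h.inv y hy)
  have hcy : c = (1 - l⁻¹) • y := by
    rw [sub_eq_iff_eq_add] at k1; rw [k1]; module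
  refine ⟨by rw [← hcy]; exact hc, ?_⟩
  intro m hm hmφ hmK
  have k2 := key m hm hmφ hmK
  rw [← k1] at k2
  have k3 := sub_right_injective k2
  exact smul_right_injective E3 (neg_ne_zero.2 (inv_ne_zero hl0)) k3

lemma Sup3.offline {K : Set E3} {φ : E3 →L[ℝ] ℝ} {l : ℝ} (h : Sup3 K φ l) {y1 y2 : E3} (_hy1 : y1 ∈ K)
    (hφ1 : φ y1 = -l) (hy2 : y2 ∈ K) (hφ2 : φ y2 = -l) (hne : y1 ≠ y2)
    (hmax : ∀ f ∈ K, φ f = -l → ‖f - y1‖ ≤ ‖y2 - y1‖) {β : ℝ} (hβ : 0 < β)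
    (hg : (-l⁻¹) • (y2 + β • (y2 - y1)) ∈ K) {f : E3} (hf : f ∈ K) (hφf : φ f = -l) :
    ∃ κ : ℝ, f = y1 + κ • (y2 - y1) := by
  by_contra! hno
  have hl := h.l1
  set e := y2 - y1 with he
  have he0 : e ≠ 0 := sub_ne_zero.2 hne.symm
  have hee : 0 < ⟪e, e⟫ := real_inner_self_pos.2 he0
  set κ := ⟪e, f - y1⟫ / ⟪e, e⟫ with hκ
  set d := f - y1 - κ • e with hd
  have hd0 : d ≠ 0 := by
    intro h0
    apply hno κ
    rw [hd, sub_eq_zero, sub_eq_iff_eq_add] at h0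
    rw [h0, add_comm]
  have hde : ⟪e, d⟫ = 0 := by
    rw [hd, inner_sub_right, real_inner_smul_right, hκ]; field_simp; ring
  have hfd : f - y1 = κ • e + d := by rw [hd]; abel
  have hdd : 0 < ⟪d, d⟫ := real_inner_self_pos.2 hd0
  have hnorm : ∀ s t : ℝ, ‖s • e + t • d‖ ^ 2 = s ^ 2 * ⟪e, e⟫ + t ^ 2 * ⟪d, d⟫ := by
    intro s t
    rw [← real_inner_self_eq_norm_sq]
    simp only [inner_add_left, inner_add_right, real_inner_smul_left, real_inner_smul_right]
    rw [real_inner_comm e d, hde]; ring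
  have hsq : ∀ f ∈ K, φ f = -l → ‖f - y1‖ ^ 2 ≤ ⟪e, e⟫ := by
    intro f hf hφ
    rw [real_inner_self_eq_norm_sq]
    exact pow_le_pow_left₀ (norm_nonneg _) (hmax f hf hφ) 2
  have hκ1 : κ < 1 := by
    have := hsq f hf hφf
    rw [hfd] at this
    have h2 := hnorm κ 1
    rw [one_smul] at h2
    rw [h2] at this
    by_contra! hn
    have h3 : 1 ≤ κ ^ 2 := by nlinarith
    have h4 := mul_le_mul_of_nonneg_right h3 hee.le
    linarith
  have hφe : φ e = 0 := by rw [he, map_sub, hφ1, hφ2]; ring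
  have hφd : φ d = 0 := by rw [hd, map_sub, map_sub, map_smul, hφe, hφf, hφ1]; simp
  have hli : LinearIndependent ℝ ![y2, d] := by
    rw [LinearIndependent.pair_iff]
    intro a b hab
    have h1 := congrArg φ hab
    rw [map_add, map_smul, map_smul, hφd, hφ2, map_zero, smul_zero, add_zero, smul_eq_mul] at h1
    have ha : a = 0 := by
      rcases mul_eq_zero.1 h1 with h | h
      · exact h
      · linarith
    rw [ha, zero_smul, zero_add] at hab
    exact ⟨ha, (smul_eq_zero.1 hab).resolve_right hd0⟩
  have huniq : ∀ f ∈ K, φ f = -l → f ∈ Submodule.span ℝ ({y2, d} : Set E3) → f = y2 := by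
    intro f hf hφf hfs
    obtain ⟨a, b, rfl⟩ := Submodule.mem_span_pair.1 hfs
    have h1 := hφf
    rw [map_add, map_smul, map_smul, hφd, hφ2, smul_zero, add_zero, smul_eq_mul] at h1
    have ha : a = 1 := by
      have : (a - 1) * -l = 0 := by linarith
      rcases mul_eq_zero.1 this with h | h
      · linarith
      · linarith
    rw [ha, one_smul] at hf hφf ⊢
    have h2 := hsq _ hf hφf
    have h3 : y2 + b • d - y1 = (1:ℝ) • e + b • d := by rw [he]; module
    rw [h3, hnorm] at h2
    have h4 : b ^ 2 * ⟪d, d⟫ ≤ 0 := by linarith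
    have hb : b = 0 := by
      by_contra hb
      have : 0 < b ^ 2 * ⟪d, d⟫ := by positivity
      linarith
    rw [hb, zero_smul, add_zero]
  obtain ⟨-, hm⟩ := h.single hy2 hφ2 hli huniq
  have hden : 0 < 1 - κ + β := by linarith
  set θ := (1 - κ) / (1 - κ + β) with hθ
  have hθ0 : 0 ≤ θ := div_nonneg (by linarith) hden.le
  have hθ1 : 0 < 1 - θ := by rw [sub_pos, hθ, div_lt_one hden]; linarith
  have hmem := h.cvx hg (h.inv f hf) hθ0 hθ1.le (by ring)
  have hfe : f = y1 + κ • e + d := by rw [hd]; abel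
  have hθe : θ * (1 - κ + β) = 1 - κ := by rw [hθ]; field_simp
  have hpt : θ • ((-l⁻¹) • (y2 + β • e)) + (1 - θ) • ((-l⁻¹) • f) = (-l⁻¹) • (y2 + (1 - θ) • d) := by
    have hy : y2 = y1 + e := by rw [he]; abel
    rw [smul_comm θ, smul_comm (1 - θ), ← smul_add]
    congr 1
    rw [hfe, hy]
    have : θ • (y1 + e + β • e) + (1 - θ) • (y1 + κ • e + d) = y1 + (θ * (1 - κ + β) + κ) • e + (1 - θ) • d := by
      module
    rw [this, hθe]
    module
  rw [hpt] at hmem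
  have := hm (y2 + (1 - θ) • d) (Submodule.mem_span_pair.2 ⟨1, 1 - θ, by simp⟩)
    (by rw [map_add, map_smul, hφd, hφ2]; simp) hmem
  have h2 : (1 - θ) • d = 0 := by simpa using this
  exact smul_ne_zero hθ1.ne' hd0 h2

lemma Sup3.line {K : Set E3} {φ : E3 →L[ℝ] ℝ} {l : ℝ} (h : Sup3 K φ l) {y1 y2 : E3}
    (hy1 : y1 ∈ K ∧ φ y1 = -l) (hy2 : y2 ∈ K ∧ φ y2 = -l) (hne : y1 ≠ y2)
    (hmax : ∀ a, a ∈ K ∧ φ a = -l → ∀ b, b ∈ K ∧ φ b = -l → ‖b - a‖ ≤ ‖y2 - y1‖) {f : E3}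
    (hf : f ∈ K ∧ φ f = -l) : ∃ κ : ℝ, f = y1 + κ • (y2 - y1) := by
  have hl := h.l1
  have hl0 : l ≠ 0 := by linarith
  have hφ1 : φ y1 = -l := hy1.2
  have hφ2 : φ y2 = -l := hy2.2
  have hli : LinearIndependent ℝ ![y1, y2] := by
    rw [LinearIndependent.pair_iff]
    intro a b hab
    have h1 := congrArg φ hab
    rw [map_add, map_smul, map_smul, hφ1, hφ2, map_zero, smul_eq_mul, smul_eq_mul] at h1
    have ha : a = -b := by
      have : (a + b) * l = 0 := by linarith
      rcases mul_eq_zero.1 this with h | h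
      · linarith
      · exact absurd h hl0
    rw [ha] at hab
    have h3 : b • (y2 - y1) = 0 := by rw [← hab]; module
    have hb := (smul_eq_zero.1 h3).resolve_right (sub_ne_zero.2 (Ne.symm hne))
    rw [ha, hb]; simp
  obtain ⟨c, hcs, hcφ, hc⟩ := h.plane hy1.1 hφ1 hli
  obtain ⟨a, b, rfl⟩ := Submodule.mem_span_pair.1 hcs
  have hab : (a + b) * -l = 1 - l := by
    rw [← hcφ, map_add, map_smul, map_smul, hφ1, hφ2, smul_eq_mul, smul_eq_mul]; ring
  have k1 := hc y1 hy1.1 (Submodule.subset_span (by simp))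
  have k2 := hc y2 hy2.1 (Submodule.subset_span (by simp))
  -- the two points
  by_cases hs : 0 < -l * b + l - 1
  · refine h.offline hy1.1 hφ1 hy2.1 hφ2 hne (fun f hf hφ => hmax y1 hy1 f ⟨hf, hφ⟩) hs ?_ hf.1 hf.2
    convert k2 using 1
    have ea : a = -b + (l - 1) / l := by field_simp; linarith
    rw [ea]
    have h1 : -l⁻¹ * (-l * b + l - 1) = b - (l - 1) / l := by field_simp; ring
    have h2 : (1 : ℝ) - (l - 1) / l = l⁻¹ := by field_simp; ring
    have : (-l⁻¹) • (y2 + (-l * b + l - 1) • (y2 - y1)) =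
      (-l⁻¹) • y2 + (-l⁻¹ * (-l * b + l - 1)) • (y2 - y1) := by module
    rw [this, h1, ← h2]
    module
  · have hs2 : 0 < -l * a + l - 1 := by nlinarith
    obtain ⟨κ, hκ⟩ := h.offline hy2.1 hφ2 hy1.1 hφ1 (Ne.symm hne) (fun f hf hφ => by
      rw [norm_sub_rev y1 y2]; exact hmax y2 hy2 f ⟨hf, hφ⟩) hs2 (by
      convert k1 using 1
      have ea : b = -a + (l - 1) / l := by field_simp; linarith
      rw [ea]
      have h1 : -l⁻¹ * (-l * a + l - 1) = a - (l - 1) / l := by field_simp; ring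
      have h2 : (1 : ℝ) - (l - 1) / l = l⁻¹ := by field_simp; ring
      have : (-l⁻¹) • (y1 + (-l * a + l - 1) • (y1 - y2)) =
        (-l⁻¹) • y1 + (-l⁻¹ * (-l * a + l - 1)) • (y1 - y2) := by module
      rw [this, h1, ← h2]
      module) hf.1 hf.2
    exact ⟨1 - κ, by rw [hκ]; module⟩

lemma Sup3.off {K : Set E3} {φ : E3 →L[ℝ] ℝ} {l : ℝ} (h : Sup3 K φ l) {y1 y2 : E3}
    (hy1 : y1 ∈ K ∧ φ y1 = -l) (hy1ne : y1 ≠ 0)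
    (hline : ∀ f, f ∈ K ∧ φ f = -l → ∃ κ : ℝ, f = y1 + κ • (y2 - y1)) {W : Submodule ℝ E3}
    (hW : W = Submodule.span ℝ ({y1, y2} : Set E3)) :
    ∀ x ∈ K, x ∉ W → (1 - l⁻¹) • y1 - x ∈ K := by
  have hl := h.l1
  have hl0 : l ≠ 0 := by linarith
  have hy1W : y1 ∈ W := by rw [hW]; exact Submodule.subset_span (by simp)
  have hy2W : y2 ∈ W := by rw [hW]; exact Submodule.subset_span (by simp)
  intro x hx hxW
  have hli : LinearIndependent ℝ ![y1, x] := by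
    rw [LinearIndependent.pair_iff]
    intro a b hab
    have hb : b = 0 := by
      by_contra hb
      apply hxW
      have h1 : b • x ∈ W := by
        have : b • x = -(a • y1) := by rw [eq_neg_iff_add_eq_zero, add_comm]; exact hab
        rw [this]; exact Submodule.neg_mem _ (Submodule.smul_mem _ _ hy1W)
      exact (Submodule.smul_mem_iff _ hb).1 h1
    rw [hb, zero_smul, add_zero] at hab
    exact ⟨(smul_eq_zero.1 hab).resolve_right hy1ne, hb⟩
  refine (h.single hy1.1 hy1.2 hli ?_).1 x hx (Submodule.subset_span (by simp))
  intro f hf hφf hfs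
  obtain ⟨κ, hκ⟩ := hline f ⟨hf, hφf⟩
  have hfW : f ∈ W := by
    rw [hκ]
    exact Submodule.add_mem _ hy1W (Submodule.smul_mem _ _
      (Submodule.sub_mem _ hy2W hy1W))
  obtain ⟨a, b, rfl⟩ := Submodule.mem_span_pair.1 hfs
  have hb : b = 0 := by
    by_contra hb
    apply hxW
    have h1 : b • x ∈ W := by
      have := Submodule.sub_mem _ hfW (Submodule.smul_mem _ a hy1W)
      simpa using this
    exact (Submodule.smul_mem_iff _ hb).1 h1
  have hφ1 : φ y1 = -l := hy1.2
  rw [hb, zero_smul, add_zero] at hφf ⊢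
  rw [map_smul, hφ1, smul_eq_mul] at hφf
  have ha : a = 1 := by
    have : (a - 1) * l = 0 := by linarith
    rcases mul_eq_zero.1 this with h | h
    · linarith
    · exact absurd h hl0
  rw [ha, one_smul]

lemma dense_span_compl (y1 y2 : E3) : Dense {x : E3 | x ∉ Submodule.span ℝ ({y1, y2} : Set E3)} := by
  refine Measure.dense_of_ae (μ := volume) ?_
  have : volume ((Submodule.span ℝ ({y1, y2} : Set E3) : Submodule ℝ E3) : Set E3) = 0 := by
    apply Measure.addHaar_submodule
    intro ht
    have h2 := finrank_span_le_card (R := ℝ) ({y1, y2} : Set E3)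
    rw [ht, finrank_top] at h2
    have h3 : ({y1, y2} : Set E3).toFinset.card ≤ 2 := by
      have : ({y1, y2} : Set E3).toFinset = {y1, y2} := by ext; simp
      rw [this]; exact Finset.card_le_two
    have h4 : Module.finrank ℝ E3 = 3 := by simp
    omega
  exact measure_eq_zero_iff_ae_notMem.1 this

lemma exists_diam {F : Set E3} (hFc : IsCompact F) (hFn : F.Nonempty) :
    ∃ y1 ∈ F, ∃ y2 ∈ F, ∀ a ∈ F, ∀ b ∈ F, ‖b - a‖ ≤ ‖y2 - y1‖ := by
  have hcont : ContinuousOn (fun w : E3 × E3 => ‖w.2 - w.1‖) (F ×ˢ F) :=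
    (continuous_snd.sub continuous_fst).norm.continuousOn
  obtain ⟨w, hw, hmax⟩ := (hFc.prod hFc).exists_isMaxOn (hFn.prod hFn) hcont
  rw [isMaxOn_iff] at hmax
  exact ⟨w.1, hw.1, w.2, hw.2, fun a ha b hb => hmax (a, b) ⟨ha, hb⟩⟩

theorem Sup3.center {K : Set E3} {φ : E3 →L[ℝ] ℝ} {l : ℝ} (h : Sup3 K φ l) (hK : IsCompact K)
    (hInt0 : (interior K).Nonempty) (hex : ∃ y ∈ K, φ y = -l) :
    ∃ c : E3, c ≠ 0 ∧ ∀ x ∈ K, c - x ∈ K := by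
  have hl := h.l1
  have hl0 : l ≠ 0 := by linarith
  set F : Set E3 := K ∩ {x | φ x = -l} with hF
  have hFc : IsCompact F := hK.inter_right (isClosed_eq φ.continuous continuous_const)
  have hFn : F.Nonempty := by obtain ⟨y, hy, hφ⟩ := hex; exact ⟨y, hy, hφ⟩
  obtain ⟨y1, hy1, y2, hy2, hmax⟩ := exists_diam hFc hFn
  have hy1ne : y1 ≠ 0 := by
    rintro rfl
    have := hy1.2
    simp only [mem_ofPred_eq, map_zero] at this
    linarith
  have hline : ∀ f ∈ F, ∃ κ : ℝ, f = y1 + κ • (y2 - y1) := by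
    intro f hf
    by_cases hne : y1 = y2
    · refine ⟨0, ?_⟩
      have := hmax y1 hy1 f hf
      rw [← hne, sub_self, norm_zero] at this
      have := sub_eq_zero.1 (norm_le_zero_iff.1 this)
      simpa using this
    exact h.line hy1 hy2 hne hmax hf
  set W := Submodule.span ℝ ({y1, y2} : Set E3) with hW
  have hoff := h.off hy1 hy1ne hline hW
  refine ⟨(1 - l⁻¹) • y1, smul_ne_zero ?_ hy1ne, ?_⟩
  · have : l⁻¹ < 1 := inv_lt_one_of_one_lt₀ hl
    linarith
  intro x hx
  have hWd : Dense {x : E3 | x ∉ W} := dense_span_compl y1 y2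
  have hcl : IsClosed {x : E3 | (1 - l⁻¹) • y1 - x ∈ K} :=
    hK.isClosed.preimage (f := fun x => (1 - l⁻¹) • y1 - x) (by fun_prop)
  have h1 : x ∈ closure (interior K) := by
    rw [h.cvx.closure_interior_eq_closure_of_nonempty_interior hInt0]
    exact subset_closure hx
  have h2 : closure (interior K) ⊆ closure (interior K ∩ {x | x ∉ W}) :=
    closure_minimal (hWd.open_subset_closure_inter isOpen_interior) isClosed_closure
  have h3 : closure (interior K ∩ {x | x ∉ W}) ⊆ {x : E3 | (1 - l⁻¹) • y1 - x ∈ K} :=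
    closure_minimal (fun z hz => hoff z (interior_subset hz.1) hz.2) hcl
  exact h3 (h2 h1)

theorem exists_center {K : Set E3} (hK : IsCompact K) (hc : Convex ℝ K) (h0 : (0 : E3) ∈ interior K)
    (hsec : SecSym K 0) (hns : ¬ ∀ x ∈ K, -x ∈ K) : ∃ c : E3, c ≠ 0 ∧ ∀ x ∈ K, c - x ∈ K := by
  have hn := mem_interior_iff_mem_nhds.1 h0
  have hgc : Continuous (gauge K) := continuous_gauge hc hn
  have hg1 : ∀ x, gauge K x ≤ 1 ↔ x ∈ K := by
    intro x
    rw [gauge_le_one_iff_mem_closure hc hn, hK.isClosed.closure_eq]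
  obtain ⟨y, hy, hmax⟩ := hK.exists_isMaxOn ⟨0, interior_subset h0⟩
    (f := fun x => gauge K (-x)) (by fun_prop)
  have hmax : ∀ x ∈ K, gauge K (-x) ≤ gauge K (-y) := fun x hx => hmax hx
  set l := gauge K (-y) with hl
  have hl1 : 1 < l := by
    by_contra! hle
    exact hns fun x hx => (hg1 _).1 ((hmax x hx).trans hle)
  have hl0 : 0 < l := by linarith
  have hinv : ∀ x ∈ K, (-l⁻¹) • x ∈ K := by
    intro x hx
    rw [← hg1]
    have e : (-l⁻¹) • x = l⁻¹ • (-x) := by module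
    rw [e, gauge_smul_of_nonneg (by positivity), smul_eq_mul, inv_mul_le_iff₀ hl0, mul_one]
    exact hmax x hx
  set x := (-l⁻¹) • y with hx
  have hxi : x ∉ interior K := by
    intro hxi
    rw [← gauge_lt_one_iff_mem_interior hc hn] at hxi
    have e : (-l⁻¹) • y = l⁻¹ • (-y) := by module
    rw [hx, e, gauge_smul_of_nonneg (by positivity), smul_eq_mul, ← hl, inv_mul_cancel₀ hl0.ne'] at hxi
    exact lt_irrefl _ hxi
  obtain ⟨f, hf⟩ := geometric_hahn_banach_open_point hc.interior isOpen_interior hxi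
  have hfx : 0 < f x := by simpa using hf 0 h0
  have hfK : ∀ z ∈ K, f z ≤ f x := by
    intro z hz
    have h1 : z ∈ closure (interior K) := by
      rw [hc.closure_interior_eq_closure_of_nonempty_interior ⟨0, h0⟩]
      exact subset_closure hz
    have h2 : closure (interior K) ⊆ {z | f z ≤ f x} :=
      closure_minimal (fun w hw => (hf w hw).le) (isClosed_le f.continuous continuous_const)
    exact h2 h1
  have hy' : y = (-l) • x := by rw [hx, smul_smul]; field_simp; simp
  set φ : E3 →L[ℝ] ℝ := (f x)⁻¹ • f with hφd
  have hφ : ∀ z, φ z = (f x)⁻¹ * f z := fun z => rfl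
  have hup : ∀ z ∈ K, φ z ≤ 1 := by
    intro z hz
    rw [hφ, inv_mul_le_iff₀ hfx, mul_one]; exact hfK z hz
  have hφx : φ x = 1 := by rw [hφ, inv_mul_cancel₀ hfx.ne']
  have hS : Sup3 K φ l := by
    refine ⟨hc, hl1, hup, ?_, hinv, hsec⟩
    intro z hz
    have := hup _ (hinv z hz)
    rw [map_smul, smul_eq_mul, neg_mul, neg_le, ← div_eq_inv_mul, le_div_iff₀ hl0] at this
    linarith
  refine hS.center hK ⟨0, h0⟩ ⟨y, hy, ?_⟩
  rw [hy', map_smul, hφx, smul_eq_mul, mul_one]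

end FCT

namespace FCT
open Filter Topology

lemma secSym_of {K : Set E3} {p : E3} (hp : p ∈ K)
    (hsec : ∀ P : AffineSubspace ℝ (Euc 3), IsHyperplane P → p ∈ P →
      ∃ z : Euc 3,
        (fun y => z + (z - y)) '' ((P : Set (Euc 3)) ∩ K) = (P : Set (Euc 3)) ∩ K) : SecSym K p := by
  intro v w hvw
  set S := Submodule.span ℝ (Set.range ![v, w]) with hS
  have hSp : S = Submodule.span ℝ ({v, w} : Set E3) := by
    rw [hS]; congr 1; ext x; simp [eq_comm, or_comm]
  have hfr : Module.finrank ℝ S = 2 := by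
    rw [hS, finrank_span_eq_card hvw]; simp
  have hmem : ∀ s t : ℝ, p + s • v + t • w ∈ AffineSubspace.mk' p S := by
    intro s t
    rw [AffineSubspace.mem_mk', vsub_eq_sub, hSp]
    exact Submodule.mem_span_pair.2 ⟨s, t, by abel⟩
  have hpP : p ∈ AffineSubspace.mk' p S := AffineSubspace.self_mem_mk' p S
  obtain ⟨z, hz⟩ := hsec (AffineSubspace.mk' p S)
    ⟨⟨p, hpP⟩, by rw [AffineSubspace.direction_mk', hfr]⟩ hpP
  have hin : ∀ y, y ∈ AffineSubspace.mk' p S → y ∈ K →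
      z + (z - y) ∈ AffineSubspace.mk' p S ∧ z + (z - y) ∈ K := by
    intro y h1 h2
    have : z + (z - y) ∈ (AffineSubspace.mk' p S : Set E3) ∩ K := by
      rw [← hz]; exact ⟨y, ⟨h1, h2⟩, rfl⟩
    exact this
  have h1 := (hin p hpP hp).1
  rw [AffineSubspace.mem_mk', vsub_eq_sub, hSp] at h1
  obtain ⟨α, β, hαβ⟩ := Submodule.mem_span_pair.1 h1
  refine ⟨α, β, fun s t hst => ?_⟩
  have h2 := (hin _ (hmem s t) hst).2
  convert h2 using 1
  have : p + (α - s) • v + (β - t) • w = p + (α • v + β • w) - s • v - t • w := by module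
  rw [this, hαβ]
  abel

end FCT

/-- The False Centre Theorem in `ℝ³`: if every plane section of `K`
through `p` is centrally symmetric and `p` is not a center of symmetry of `K`, then
`K` is an ellipsoid. -/
theorem stmt18 (K : Set (Euc 3)) (hK : IsConvexBody K) (p : Euc 3) (hp : p ∈ interior K)
    (hsec : ∀ P : AffineSubspace ℝ (Euc 3), IsHyperplane P → p ∈ P →
      ∃ z : Euc 3,
        (fun y => z + (z - y)) '' ((P : Set (Euc 3)) ∩ K) = (P : Set (Euc 3)) ∩ K)
    (hnc : (fun y => p + (p - y)) '' K ≠ K) :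
    IsEllipsoidOfDim 3 K := by
  obtain ⟨hcomp, hcvx, -⟩ := hK
  have hS := FCT.secSym_of (interior_subset hp) hsec
  -- translates
  have tc : ∀ a : Euc 3, IsCompact {x | x + a ∈ K} := fun a =>
    (Homeomorph.addRight a).isCompact_preimage.2 hcomp
  have tv : ∀ a : Euc 3, Convex ℝ {x | x + a ∈ K} := by
    intro q x hx y hy a b ha hb hab
    have := hcvx hx hy ha hb hab
    have e : a • (x + q) + b • (y + q) = a • x + b • y + q := by
      rw [smul_add, smul_add, add_add_add_comm, ← add_smul, hab, one_smul]
    rw [e] at this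
    exact this
  have ti : ∀ a : Euc 3, interior {x | x + a ∈ K} = {x | x + a ∈ interior K} := by
    intro a
    have hpre : {x : Euc 3 | x + a ∈ K} = (Homeomorph.addRight a) ⁻¹' K := rfl
    rw [hpre, ← Homeomorph.preimage_interior]; rfl
  have ts : ∀ a : Euc 3, FCT.SecSym {x | x + a ∈ K} (p - a) := by
    intro a v w hvw
    obtain ⟨α, β, h⟩ := hS v w hvw
    refine ⟨α, β, fun s t hst => ?_⟩
    simp only [mem_ofPred_eq] at *
    have e : ∀ s t : ℝ, p - a + s • v + t • w + a = p + s • v + t • w := by intro s t; abel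
    rw [e] at *
    exact h s t hst
  -- centre
  obtain ⟨c, hc0, hc⟩ : ∃ c : Euc 3, c ≠ 0 ∧ ∀ x ∈ {x | x + p ∈ K}, c - x ∈ {x | x + p ∈ K} := by
    refine FCT.exists_center (tc p) (tv p) (by rw [ti p]; simpa using hp)
      (by simpa using ts p) ?_
    intro hn
    apply hnc
    have h1 : ∀ y ∈ K, p + (p - y) ∈ K := by
      intro y hy
      have := hn (y - p) (by simpa using hy)
      simp only [mem_ofPred_eq] at this
      convert this using 1
      abel
    ext y; constructor
    · rintro ⟨x, hx, rfl⟩; exact h1 x hx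
    · intro hy; exact ⟨p + (p - y), h1 y hy, by simp⟩
  set a := p + (1/2 : ℝ) • c with ha
  set K0 : Set (Euc 3) := {x | x + a ∈ K} with hK0
  have hsym : ∀ x ∈ K0, -x ∈ K0 := by
    intro x hx
    have := hc (x + (1/2:ℝ) • c) (by
      simp only [mem_ofPred_eq]
      have e : x + (1/2:ℝ) • c + p = x + a := by rw [ha]; abel
      rw [e]; exact hx)
    simp only [mem_ofPred_eq] at this
    show -x + a ∈ K
    convert this using 1
    rw [ha]; module
  have hpi : p - a ∈ interior K0 := by rw [hK0, ti a]; simpa using hp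
  have hp0 : p - a ≠ 0 := by
    rw [ha]
    simpa using hc0
  have h0 : (0 : Euc 3) ∈ interior K0 := by
    have hP : -K0 = K0 := by
      ext z; constructor
      · intro hz; simpa using hsym _ hz
      · intro hz; exact hsym _ hz
    have h1 : interior (-K0) = - interior K0 := ((Homeomorph.neg (Euc 3)).preimage_interior K0).symm
    rw [hP] at h1
    have h2 : -(p - a) ∈ interior K0 := by rw [h1, Set.neg_mem_neg]; exact hpi
    have := (tv a).interior hpi h2 (by norm_num : (0:ℝ) ≤ 1/2)
      (by norm_num : (0:ℝ) ≤ 1/2) (by norm_num)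
    convert this using 1
    module
  obtain ⟨T, hT⟩ := FCT.ellipsoid_of_dense (tc a) (tv a) h0
    (FCT.dense_skew (tc a) (tv a) hsym hpi hp0 h0 (ts a))
  refine ⟨T.toAffineEquiv.trans (AffineEquiv.constVAdd ℝ (Euc 3) a), ⊤, by simp, ?_⟩
  have key : ∀ x, x ∈ K ↔ ∃ y ∈ closedBall (0 : Euc 3) 1, T y = x - a := by
    intro x
    have : x ∈ K ↔ x - a ∈ {x | x + a ∈ K} := by simp
    rw [this, hT]
    rfl
  ext x
  rw [key]
  constructor
  · rintro ⟨y, hy, h⟩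
    exact ⟨y, ⟨hy, trivial⟩, by simp [h]⟩
  · rintro ⟨y, ⟨hy, -⟩, rfl⟩
    exact ⟨y, hy, by simp⟩
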